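/- arXiv:2107.04081 — 2 statements merged into one kernel-verified Lean document; each statement's English description precedes it below -/
import Mathlib

section
/- Let F = ⟨S_A, S_B, O, ρ⟩ be a game form and let K be a set of colors with at least two elements. Call a deterministic concurrent arena C = ⟨S_A, S_B, Q, q0, δ, K, col⟩ built on F if for every state q ∈ Q there is a function h_q : O → Q with δ(q,a,b) = h_q(ρ(a,b)) for all a, b (every local interaction is obtained from F by a renaming of the outcomes). The following are equivalent: (1) F is determined; (2) for every Borel W ⊆ K^ω, every game ⟨C, W⟩ with C built on F is determined; (3) there exists a Borel W with ∅ ⊊ W ⊊ K^ω such that every game ⟨C, W⟩ with C built on F is determined. -/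
open MeasureTheory
open scoped Classical

universe u

/-- The cylinder set generated by a finite word. -/
def Cyl {K : Type u} (w : List K) : Set (ℕ → K) :=
  {ρ | ∀ i : ℕ, ∀ h : i < w.length, ρ i = w.get ⟨i, h⟩}

/-- The σ-algebra on `ℕ → K` generated by cylinder sets. -/
def BorelSeq (K : Type u) : MeasurableSpace (ℕ → K) :=
  MeasurableSpace.generateFrom {s | ∃ w : List K, s = Cyl w}

/-- A game form (given by its outcome function `ρ : S_A → S_B → O`) is determined if
for every subset `V` of outcomes, either Player A can force the outcome into `V`,
or Player B can force it out of `V`. -/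
def GFDetermined {SA SB O : Type u} (ρ : SA → SB → O) : Prop :=
  ∀ V : Set O, (∃ a, ∀ b, ρ a b ∈ V) ∨ (∃ b, ∀ a, ρ a b ∉ V)

/-- The color history `col(π_0,π_1) ⋯ col(π_{n-1},π_n)` of a play prefix. -/
def colorHist {Q K : Type u} (col : Q → Q → K) (π : ℕ → Q) (n : ℕ) : List K :=
  List.ofFn (fun i : Fin n => col (π i) (π (i + 1)))

/-- The color sequence of an infinite play. -/
def colorSeq {Q K : Type u} (col : Q → Q → K) (π : ℕ → Q) : ℕ → K :=
  fun n => col (π n) (π (n + 1))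

/-- `π` is a play consistent with Player A's color strategy `sA`. -/
def PlayA {A B Q K : Type u} (q0 : Q) (δ : Q → A → B → Q) (col : Q → Q → K)
    (sA : List K → Q → A) (π : ℕ → Q) : Prop :=
  π 0 = q0 ∧ ∀ n, ∃ b, π (n + 1) = δ (π n) (sA (colorHist col π n) (π n)) b

/-- `π` is a play consistent with Player B's color strategy `sB`. -/
def PlayB {A B Q K : Type u} (q0 : Q) (δ : Q → A → B → Q) (col : Q → Q → K)
    (sB : List K → Q → B) (π : ℕ → Q) : Prop :=
  π 0 = q0 ∧ ∀ n, ∃ a, π (n + 1) = δ (π n) a (sB (colorHist col π n) (π n))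

/-- Player A's color strategy `sA` is winning for objective `W`. -/
def WinA {A B Q K : Type u} (q0 : Q) (δ : Q → A → B → Q) (col : Q → Q → K)
    (W : Set (ℕ → K)) (sA : List K → Q → A) : Prop :=
  ∀ π : ℕ → Q, PlayA q0 δ col sA π → colorSeq col π ∈ W

/-- Player B's color strategy `sB` is winning for the objective complementary to `W`. -/
def WinB {A B Q K : Type u} (q0 : Q) (δ : Q → A → B → Q) (col : Q → Q → K)
    (W : Set (ℕ → K)) (sB : List K → Q → B) : Prop :=
  ∀ π : ℕ → Q, PlayB q0 δ col sB π → colorSeq col π ∉ W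

/-- The arena with transition function `δ` is built on the game form `ρ` if every
local interaction `δ q` is obtained from `ρ` by a renaming of the outcomes. -/
def BuiltOn {SA SB O Q : Type u} (ρ : SA → SB → O) (δ : Q → SA → SB → Q) : Prop :=
  ∀ q : Q, ∃ h : O → Q, ∀ a b, δ q a b = h (ρ a b)

set_option linter.unusedVariables false




namespace BD

/-- A game tree without leaves; `st p = some i` means that player `i` has already lost at `p`. -/
structure GTree : Type (u+1) where
  N : Type u
  lev : N → ℕ
  par : N → N
  child : N → N
  st : N → Option Bool
  lev_par : ∀ p, lev (par p) = lev p - 1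
  lev_child : ∀ p, lev (child p) = lev p + 1
  par_child : ∀ p, par (child p) = p
  st_mono : ∀ p i, st (par p) = some i → st p = some i

/-- Plays. -/
def Play (T : GTree.{u}) (x : ℕ → T.N) : Prop :=
  ∀ n, T.lev (x n) = n ∧ T.par (x (n+1)) = x n

/-- Strategies (for either player). -/
@[ext] structure Strat (T : GTree.{u}) : Type u where
  f : T.N → T.N
  lev_f : ∀ p, T.lev (f p) = T.lev p + 1
  par_f : ∀ p, T.par (f p) = p

def Cons (T : GTree.{u}) (i : Bool) (σ : Strat T) (x : ℕ → T.N) : Prop :=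
  ∀ n, n.bodd = i → x (n+1) = σ.f (x n)

namespace GTree
variable (T : GTree.{u})

def anc (p : T.N) (n : ℕ) : T.N := T.par^[T.lev p - n] p

def le (v p : T.N) : Prop := T.anc p (T.lev v) = v

lemma lev_iter (k : ℕ) (p : T.N) : T.lev (T.par^[k] p) = T.lev p - k := by
  induction k generalizing p with
  | zero => simp
  | succ k ih => rw [Function.iterate_succ_apply, ih, T.lev_par]; omega

lemma lev_anc (p : T.N) (n : ℕ) : T.lev (T.anc p n) = min (T.lev p) n := by
  rw [anc, lev_iter]; omega

lemma anc_self {p : T.N} {n : ℕ} (h : T.lev p ≤ n) : T.anc p n = p := by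
  rw [anc, Nat.sub_eq_zero_of_le h]; rfl

lemma anc_par {p : T.N} {n : ℕ} (h : n < T.lev p) : T.anc (T.par p) n = T.anc p n := by
  have : T.lev p - n = (T.lev p - 1 - n) + 1 := by omega
  rw [anc, anc, T.lev_par, this, Function.iterate_succ_apply]

lemma anc_anc (p : T.N) (m n : ℕ) : T.anc (T.anc p m) n = T.anc p (min m n) := by
  have h := T.lev_anc p m
  rw [anc, h]
  unfold anc
  rw [← Function.iterate_add_apply]
  congr 2; omega

lemma le_refl (p : T.N) : T.le p p := T.anc_self (_root_.le_refl _)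

lemma le_lev {v p : T.N} (h : T.le v p) : T.lev v ≤ T.lev p := by
  have := T.lev_anc p (T.lev v)
  rw [h] at this; omega

lemma le_par {v p : T.N} (h : T.le v p) (h' : T.lev v < T.lev p) : T.le v (T.par p) := by
  rw [le, T.anc_par h']; exact h

lemma le_of_par {v p : T.N} (h : T.le v (T.par p)) (h' : 0 < T.lev p) : T.le v p := by
  have := T.le_lev h
  rw [T.lev_par] at this
  rw [le, T.anc_par (by omega)] at h; exact h

lemma le_trans {u v w : T.N} (h : T.le u v) (h' : T.le v w) : T.le u w := by
  have := T.le_lev h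
  unfold le at *
  rw [← h', anc_anc, min_eq_right this] at h
  exact h

lemma par_le {p : T.N} (h : 0 < T.lev p) : T.le (T.par p) p :=
  T.le_of_par (T.le_refl _) h

lemma le_total {v w p : T.N} (h : T.le v p) (h' : T.le w p) (hl : T.lev v ≤ T.lev w) :
    T.le v w := by
  unfold le at *
  rw [← h', anc_anc, min_eq_right hl]; exact h

lemma eq_of_le {v w p : T.N} (h : T.le v p) (h' : T.le w p) (hl : T.lev v = T.lev w) :
    v = w := by
  unfold le at *
  rw [← h, ← h', hl]

lemma anc_le (p : T.N) (n : ℕ) : T.le (T.anc p n) p := by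
  rw [le, lev_anc]
  rcases Nat.le_total (T.lev p) n with h | h
  · rw [min_eq_left h, T.anc_self h, T.anc_self (_root_.le_refl _)]
  · rw [min_eq_right h]

lemma le_ind {P : T.N → Prop} (hP : ∀ p, P (T.par p) → P p) {v p : T.N} (h : T.le v p)
    (hv : P v) : P p := by
  have : ∀ k p, P (T.par^[k] p) → P p := by
    intro k
    induction k with
    | zero => intro p h; exact h
    | succ k ih => intro p h; rw [Function.iterate_succ_apply] at h; exact hP _ (ih _ h)
  apply this (T.lev p - T.lev v)
  have h2 : T.par^[T.lev p - T.lev v] p = v := h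
  rwa [h2]

lemma st_le {v p : T.N} {i : Bool} (h : T.le v p) (hv : T.st v = some i) : T.st p = some i :=
  T.le_ind (P := fun p => T.st p = some i) (fun p => T.st_mono p i) h hv

end GTree

lemma Play.anc {T : GTree.{u}} {x : ℕ → T.N} (hx : Play T x) {m n : ℕ} (h : m ≤ n) :
    T.anc (x n) m = x m := by
  induction n, h using Nat.le_induction with
  | base => exact T.anc_self (hx m).1.le
  | succ n hn ih =>
    rw [← T.anc_par (by rw [(hx (n+1)).1]; omega), (hx n).2, ih]

lemma Play.le {T : GTree.{u}} {x : ℕ → T.N} (hx : Play T x) {m n : ℕ} (h : m ≤ n) :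
    T.le (x m) (x n) := by
  rw [GTree.le, (hx m).1, hx.anc h]

lemma Play.eq_of_le {T : GTree.{u}} {x : ℕ → T.N} (hx : Play T x) {v : T.N} {n : ℕ}
    (h : T.le v (x n)) : v = x (T.lev v) := by
  have h2 := T.le_lev h
  rw [(hx n).1] at h2
  rw [GTree.le, hx.anc h2] at h
  exact h.symm

lemma Play.st_mono {T : GTree.{u}} {x : ℕ → T.N} (hx : Play T x) {m n : ℕ} (h : m ≤ n)
    {i : Bool} (hs : T.st (x m) = some i) : T.st (x n) = some i := T.st_le (hx.le h) hs

/-- Morphisms. -/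
structure Hom (S T : GTree.{u}) : Type u where
  f : S.N → T.N
  lev_f : ∀ p, T.lev (f p) = S.lev p
  par_f : ∀ p, f (S.par p) = T.par (f p)
  st_f : ∀ p, T.st (f p) ≠ none → S.st p ≠ none

def Hom.id (T : GTree.{u}) : Hom T T := ⟨fun p => p, fun _ => rfl, fun _ => rfl, fun _ h => h⟩

def Hom.comp {R S T : GTree.{u}} (g : Hom S T) (f : Hom R S) : Hom R T :=
  ⟨fun p => g.f (f.f p), fun p => by rw [g.lev_f, f.lev_f], fun p => by rw [f.par_f, g.par_f],
    fun p h => f.st_f _ (g.st_f _ h)⟩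

lemma Hom.play {S T : GTree.{u}} (f : Hom S T) {x : ℕ → S.N} (hx : Play S x) :
    Play T (fun n => f.f (x n)) := fun n =>
  ⟨by rw [f.lev_f, (hx n).1], by rw [← f.par_f, (hx n).2]⟩

lemma Hom.st_none {S T : GTree.{u}} (f : Hom S T) {p : S.N} (h : S.st p = none) :
    T.st (f.f p) = none := by
  by_contra h'
  exact f.st_f p h' h

/-- The lifting relation: either an exact lift, or a lift up to a position where the
player `i` has lost. -/
def Lift (S T : GTree.{u}) (f : S.N → T.N) (k : ℕ) (i : Bool) (y : ℕ → S.N) (x : ℕ → T.N) :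
    Prop :=
  (∀ n, f (y n) = x n ∧ S.st (y n) = T.st (x n)) ∨
    ∃ n, k ≤ n ∧ S.st (y n) = some i ∧ f (y n) = x n

/-- Coverings. -/
structure Cover (S T : GTree.{u}) (k : ℕ) : Type u extends Hom S T where
  inj : ∀ p q, S.lev p ≤ k → f p = f q → p = q
  surj : ∀ p, T.lev p ≤ k → ∃ q, f q = p
  st_eq : ∀ p, S.lev p ≤ k → S.st p = T.st (f p)
  φ : Bool → Strat S → Strat T
  loc : ∀ i σ τ n, (∀ p, S.lev p < n → σ.f p = τ.f p) →
    ∀ p, T.lev p < n → (φ i σ).f p = (φ i τ).f p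
  agree : ∀ i σ p, S.lev p < k → (φ i σ).f (f p) = f (σ.f p)
  lift : ∀ i σ x, Play T x → Cons T i (φ i σ) x →
    ∃ y, Play S y ∧ Cons S i σ y ∧ Lift S T f k i y x

lemma Hom.eq_le {S T : GTree.{u}} (f : Hom S T) {y : ℕ → S.N} {x : ℕ → T.N} (hy : Play S y)
    (hx : Play T x) {m n : ℕ} (h : m ≤ n) (hn : f.f (y n) = x n) : f.f (y m) = x m := by
  have h1 := (f.play hy).anc h
  have h2 := hx.anc h
  rw [← h1, hn, h2]

/-- one-step persistence of losing lifts -/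
lemma Lift.persist {S T : GTree.{u}} {k : ℕ} (f : Hom S T) {i : Bool} {y : ℕ → S.N}
    {x : ℕ → T.N} (hy : Play S y) (hx : Play T x) (h : Lift S T f.f k i y x) {n : ℕ}
    (hn : T.st (x n) = some i) :
    ∃ n', n' ≤ n ∧ (n' = n ∨ k ≤ n') ∧ S.st (y n') = some i ∧ f.f (y n') = x n' := by
  rcases h with h | ⟨m, hm, h1, h2⟩
  · exact ⟨n, le_rfl, Or.inl rfl, by rw [(h n).2, hn], (h n).1⟩
  · rcases Nat.le_total m n with hmn | hmn
    · exact ⟨m, hmn, Or.inr hm, h1, h2⟩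
    · have h3 := f.eq_le hy hx hmn h2
      refine ⟨n, le_rfl, Or.inl rfl, ?_, h3⟩
      have h4 : S.st (y n) ≠ none := f.st_f _ (by rw [h3, hn]; simp)
      obtain ⟨j, hj⟩ := Option.ne_none_iff_exists'.mp h4
      have := hy.st_mono hmn hj
      rw [h1] at this
      rw [hj, this]

def Cover.weaken {S T : GTree.{u}} {k l : ℕ} (C : Cover S T k) (h : l ≤ k) : Cover S T l where
  toHom := C.toHom
  inj p q hp := C.inj p q (hp.trans h)
  surj p hp := C.surj p (hp.trans h)
  st_eq p hp := C.st_eq p (hp.trans h)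
  φ := C.φ
  loc := C.loc
  agree i σ p hp := C.agree i σ p (lt_of_lt_of_le hp h)
  lift i σ x hx hc := by
    obtain ⟨y, h1, h2, h3⟩ := C.lift i σ x hx hc
    refine ⟨y, h1, h2, ?_⟩
    rcases h3 with h3 | ⟨n, hn, h3⟩
    · exact Or.inl h3
    · exact Or.inr ⟨n, h.trans hn, h3⟩

def Cover.refl (T : GTree.{u}) (k : ℕ) : Cover T T k where
  toHom := Hom.id T
  inj p q _ h := h
  surj p _ := ⟨p, rfl⟩
  st_eq p _ := rfl
  φ _ σ := σ
  loc i σ τ n h := h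
  agree i σ p _ := rfl
  lift i σ x hx hc := ⟨x, hx, hc, Or.inl fun n => ⟨rfl, rfl⟩⟩

def Cover.comp {R S T : GTree.{u}} {k : ℕ} (C : Cover S T k) (D : Cover R S k) :
    Cover R T k where
  toHom := C.toHom.comp D.toHom
  inj p q hp h := D.inj p q hp (C.inj _ _ (by rw [D.lev_f]; exact hp) h)
  surj p hp := by
    obtain ⟨q, rfl⟩ := C.surj p hp
    rw [C.lev_f] at hp
    obtain ⟨r, rfl⟩ := D.surj q hp
    exact ⟨r, rfl⟩
  st_eq p hp := by
    rw [D.st_eq p hp, C.st_eq _ (by rw [D.lev_f]; exact hp)]; rfl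
  φ i σ := C.φ i (D.φ i σ)
  loc i σ τ n h := C.loc i _ _ n (D.loc i _ _ n h)
  agree i σ p hp := by
    have h1 := C.agree i (D.φ i σ) (D.f p) (by rw [D.lev_f]; exact hp)
    have h2 := D.agree i σ p hp
    rw [h2] at h1
    exact h1
  lift i σ x hx hc := by
    obtain ⟨y, hy, hyc, hl⟩ := C.lift i _ x hx hc
    obtain ⟨z, hz, hzc, hl'⟩ := D.lift i _ y hy hyc
    refine ⟨z, hz, hzc, ?_⟩
    rcases hl with hl | ⟨n, hn, h1, h2⟩
    · rcases hl' with hl' | ⟨n, hn, h1, h2⟩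
      · refine Or.inl fun n => ⟨?_, ?_⟩
        · change C.f (D.f (z n)) = x n
          rw [(hl' n).1, (hl n).1]
        · rw [(hl' n).2, (hl n).2]
      · refine Or.inr ⟨n, hn, h1, ?_⟩
        change C.f (D.f (z n)) = x n
        rw [h2, (hl n).1]
    · obtain ⟨n', hn', hk, h3, h4⟩ := Lift.persist D.toHom hz hy hl' h1
      refine Or.inr ⟨n', ?_, h3, ?_⟩
      · rcases hk with rfl | hk
        · exact hn
        · exact hk
      · change C.f (D.f (z n')) = x n'
        rw [h4]
        exact C.toHom.eq_le hy hx hn' h2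

end BD



namespace BD

section Unravel

variable (T : GTree.{u}) (k : ℕ) (Out : Set T.N)

/-- First positions in `Out` of level larger than `k+2`. -/
def FO : Set T.N := {v | v ∈ Out ∧ T.par v ∉ Out ∧ k + 2 < T.lev v}

def Cmp (p u : T.N) : Prop := T.le p u ∨ T.le u p

def Valid (p : T.N) (Y : Set T.N) (c : Option T.N) : Prop :=
  ∀ u, c = some u → u ∈ Y ∧ u ∈ FO T k Out ∧ Cmp T p u

/-- Nodes of the unravelled tree. -/
@[ext] structure UN : Type u where
  p : T.N
  Y : Set T.N
  c : Option T.N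
  hY : T.lev p ≤ k → Y = ∅
  hc : T.lev p ≤ k + 1 → c = none
  hu : Valid T k Out p Y c

variable {T k Out}

lemma Cmp.par {p u : T.N} (h : Cmp T p u) (h0 : 0 < T.lev p) : Cmp T (T.par p) u := by
  rcases h with h | h
  · exact Or.inl (T.le_trans (T.par_le h0) h)
  · rcases (T.le_lev h).lt_or_eq with h1 | h1
    · exact Or.inr (T.le_par h h1)
    · have : u = p := T.eq_of_le h (T.le_refl p) h1
      subst this
      exact Or.inl (T.par_le h0)

noncomputable def mk (p : T.N) (Y : Set T.N) (c : Option T.N)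
    (h : k + 1 < T.lev p → Valid T k Out p Y c) : UN T k Out where
  p := p
  Y := if T.lev p ≤ k then ∅ else Y
  c := if T.lev p ≤ k + 1 then none else c
  hY h := if_pos h
  hc h := if_pos h
  hu u hu := by
    split_ifs at hu with h1
    rw [if_neg (by omega)]
    exact h (by omega) u hu

lemma mk_Y {p : T.N} {Y : Set T.N} {c : Option T.N}
    {h : k + 1 < T.lev p → Valid T k Out p Y c} (hk : k < T.lev p) : (mk p Y c h).Y = Y :=
  if_neg (by omega)

lemma mk_c {p : T.N} {Y : Set T.N} {c : Option T.N}
    {h : k + 1 < T.lev p → Valid T k Out p Y c} (hk : k + 1 < T.lev p) : (mk p Y c h).c = c :=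
  if_neg (by omega)

lemma valid_none (p : T.N) (Y : Set T.N) : Valid T k Out p Y none := by
  intro u hu; cases hu

noncomputable def upar (q : UN T k Out) : UN T k Out :=
  mk (T.par q.p) q.Y q.c (by
    intro h u hu
    rw [T.lev_par] at h
    obtain ⟨h1, h2, h3⟩ := q.hu u hu
    exact ⟨h1, h2, h3.par (by omega)⟩)

lemma child_exists (q : UN T k Out) : ∃ r : T.N, T.lev r = T.lev q.p + 1 ∧ T.par r = q.p ∧
    Valid T k Out r q.Y q.c := by
  by_cases h : ∃ u, q.c = some u ∧ T.lev q.p < T.lev u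
  · obtain ⟨u, hu, hl⟩ := h
    obtain ⟨h1, h2, h3⟩ := q.hu u hu
    have hle : T.le q.p u := by
      rcases h3 with h3 | h3
      · exact h3
      · have := T.le_lev h3; omega
    have hlev : T.lev (T.anc u (T.lev q.p + 1)) = T.lev q.p + 1 := by
      rw [T.lev_anc]; omega
    refine ⟨T.anc u (T.lev q.p + 1), hlev, ?_, ?_⟩
    · refine T.eq_of_le (p := u) ?_ hle ?_
      · exact T.le_trans (T.par_le (by omega)) (T.anc_le _ _)
      · rw [T.lev_par, hlev]; rfl
    · intro u' hu'
      rw [hu] at hu'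
      cases hu'
      exact ⟨h1, h2, Or.inl (T.anc_le _ _)⟩
  · refine ⟨T.child q.p, T.lev_child _, T.par_child _, ?_⟩
    intro u hu
    obtain ⟨h1, h2, h3⟩ := q.hu u hu
    refine ⟨h1, h2, Or.inr ?_⟩
    apply T.le_of_par _ (by rw [T.lev_child]; omega)
    rw [T.par_child]
    rcases h3 with h3 | h3
    · have h4 : ¬ T.lev q.p < T.lev u := fun h' => h ⟨u, hu, h'⟩
      have h5 := T.le_lev h3
      have : q.p = u := T.eq_of_le h3 (T.le_refl u) (by omega)
      rw [this]; exact T.le_refl _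
    · exact h3

noncomputable def uchild (q : UN T k Out) : UN T k Out :=
  mk (child_exists q).choose q.Y q.c (fun _ => (child_exists q).choose_spec.2.2)

def Viol (q : UN T k Out) (v : T.N) : Prop :=
  q.c = none ∧ v ∈ FO T k Out ∧ T.le v q.p ∧ T.st v = none

/-- the new status -/
noncomputable def ust (q : UN T k Out) : Option Bool :=
  if h : ∃ v, Viol q v then some (decide (h.choose ∈ q.Y)) else T.st q.p

variable (hOut : ∀ p, T.par p ∈ Out → p ∈ Out)

include hOut in
lemma FO_unique {v w p : T.N} (hv : v ∈ FO T k Out) (hw : w ∈ FO T k Out) (h1 : T.le v p)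
    (h2 : T.le w p) : v = w := by
  have key : ∀ v w : T.N, v ∈ FO T k Out → w ∈ FO T k Out → T.le v p → T.le w p →
      ¬ T.lev v < T.lev w := by
    intro v w hv hw h1 h2 hl
    have h3 := T.le_par (T.le_total h1 h2 hl.le) hl
    exact hw.2.1 (T.le_ind (P := fun p => p ∈ Out) hOut h3 hv.1)
  have a := key v w hv hw h1 h2
  have b := key w v hw hv h2 h1
  exact T.eq_of_le h1 h2 (by omega)

include hOut in
lemma ust_viol {q : UN T k Out} {v : T.N} (h : Viol q v) : ust q = some (decide (v ∈ q.Y)) := by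
  have h' : ∃ v, Viol q v := ⟨v, h⟩
  have : h'.choose = v :=
    FO_unique hOut h'.choose_spec.2.1 h.2.1 h'.choose_spec.2.2.1 h.2.2.1
  rw [ust, dif_pos h', this]

lemma ust_nov {q : UN T k Out} (h : ∀ v, ¬ Viol q v) : ust q = T.st q.p := by
  rw [ust, dif_neg (by push Not; exact h)]

lemma upar_Y {q : UN T k Out} (h : k + 1 < T.lev q.p) : (upar q).Y = q.Y := by
  simp only [upar, mk]
  rw [if_neg (by rw [T.lev_par]; omega)]

lemma upar_c {q : UN T k Out} (h : k + 2 < T.lev q.p) : (upar q).c = q.c := by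
  simp only [upar, mk]
  rw [if_neg (by rw [T.lev_par]; omega)]

include hOut in
lemma ust_mono (q : UN T k Out) (i : Bool) (h : ust (upar q) = some i) : ust q = some i := by
  by_cases hv : ∃ v, Viol (upar q) v
  · obtain ⟨v, hv⟩ := hv
    have h1 : T.le v (T.par q.p) := hv.2.2.1
    have h2 := T.le_lev h1
    have h3 := hv.2.1.2.2
    rw [T.lev_par] at h2
    rw [ust_viol hOut hv, upar_Y (by omega)] at h
    rw [← h]
    apply ust_viol hOut
    refine ⟨?_, hv.2.1, T.le_of_par h1 (by omega), hv.2.2.2⟩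
    rw [← upar_c (by omega)]; exact hv.1
  · push Not at hv
    rw [ust_nov hv] at h
    have h' : T.st (T.par q.p) = some i := h
    have h2 := T.st_mono _ _ h'
    rw [ust_nov, h2]
    intro v hq
    have h3 := T.le_lev hq.2.2.1
    rcases h3.lt_or_eq with h4 | h4
    · have h5 := hq.2.1.2.2
      refine hv v ⟨?_, hq.2.1, T.le_par hq.2.2.1 h4, hq.2.2.2⟩
      rw [upar_c (by omega)]; exact hq.1
    · have : v = q.p := T.eq_of_le hq.2.2.1 (T.le_refl _) h4
      have h6 := hq.2.2.2
      rw [this, h2] at h6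
      cases h6

variable (k) in
/-- The unravelled tree. -/
noncomputable def UT : GTree.{u} where
  N := UN T k Out
  lev q := T.lev q.p
  par := upar
  child := uchild
  st := ust
  lev_par q := T.lev_par _
  lev_child q := (child_exists q).choose_spec.1
  par_child q := by
    obtain ⟨h1, h2, h3⟩ := (child_exists q).choose_spec
    have hp : (uchild q).p = (child_exists q).choose := rfl
    apply UN.ext
    · exact h2
    · rcases Nat.lt_or_ge k (T.lev q.p) with h4 | h4
      · rw [upar_Y (by rw [hp, h1]; omega), uchild, mk_Y (by rw [h1]; omega)]
      · rw [q.hY h4, (upar (uchild q)).hY (by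
          change T.lev (T.par (uchild q).p) ≤ k
          rw [hp, h2]; exact h4)]
    · rcases Nat.lt_or_ge (k+1) (T.lev q.p) with h4 | h4
      · rw [upar_c (by rw [hp, h1]; omega), uchild, mk_c (by rw [h1]; omega)]
      · rw [q.hc h4, (upar (uchild q)).hc (by
          change T.lev (T.par (uchild q).p) ≤ k + 1
          rw [hp, h2]; exact h4)]
  st_mono := ust_mono hOut

/-- the canonical lifted play -/
lemma lift_play {x : ℕ → T.N} (hx : Play T x) (Y : Set T.N) (c : Option T.N)
    (hv : ∀ n, Valid T k Out (x n) Y c) :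
    Play (UT k hOut) (fun n => mk (x n) Y c (fun _ => hv n)) := by
  intro n
  refine ⟨(hx n).1, ?_⟩
  have e0 := (hx n).1
  have e1 := (hx (n+1)).1
  have ep : T.par (x (n+1)) = x n := (hx n).2
  change upar (mk (x (n+1)) Y c (fun _ => hv (n+1))) = mk (x n) Y c (fun _ => hv n)
  have hl : T.lev (upar (mk (x (n+1)) Y c (fun _ => hv (n+1)))).p = n := by
    change T.lev (T.par (x (n+1))) = n
    rw [ep, e0]
  apply UN.ext
  · exact ep
  · rcases Nat.lt_or_ge k n with h | h
    · rw [upar_Y (by change _ < T.lev (x (n+1)); omega), mk_Y (by omega), mk_Y (by omega)]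
    · rw [UN.hY _ (by omega), UN.hY]
      change T.lev (x n) ≤ k
      omega
  · rcases Nat.lt_or_ge (k+1) n with h | h
    · rw [upar_c (by change _ < T.lev (x (n+1)); omega), mk_c (by omega), mk_c (by omega)]
    · rw [UN.hc _ (by omega), UN.hc]
      change T.lev (x n) ≤ k + 1
      omega

lemma lift_step {x : ℕ → T.N} (hx : Play T x) (Y : Set T.N) (c : Option T.N)
    (hv : ∀ n, Valid T k Out (x n) Y c) (n : ℕ) (r : UN T k Out)
    (hr : upar r = mk (x n) Y c (fun _ => hv n)) (hp : r.p = x (n+1))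
    (h1 : n = k → r.Y = Y) (h2 : n = k + 1 → r.c = c) :
    mk (x (n+1)) Y c (fun _ => hv (n+1)) = r := by
  have e0 := (hx n).1
  have e1 := (hx (n+1)).1
  have el : T.lev r.p = n + 1 := by rw [hp, e1]
  apply UN.ext
  · exact hp.symm
  · simp only [mk]
    split_ifs with h
    · rw [r.hY (by omega)]
    · rcases eq_or_ne n k with h3 | h3
      · exact (h1 h3).symm
      · rw [← upar_Y (by omega), hr]
        simp only [mk]
        rw [if_neg (by omega)]
  · simp only [mk]
    split_ifs with h
    · rw [r.hc (by omega)]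
    · rcases eq_or_ne n (k+1) with h3 | h3
      · exact (h2 h3).symm
      · rw [← upar_c (by omega), hr]
        simp only [mk]
        rw [if_neg (by omega)]

variable (T k Out) in
/-- A guess of the side moves for a position. -/
def Guess (p : T.N) : Type u := {d : Set T.N × Option T.N // Valid T k Out p d.1 d.2}

variable (k Out) in
noncomputable def gI (p : T.N) (Y : Set T.N) : Guess T k Out p :=
  if h : ∃ v, v ∈ FO T k Out ∧ v ∈ Y ∧ T.le v p then
    ⟨(Y, some h.choose), by
      intro u hu
      cases hu
      exact ⟨h.choose_spec.2.1, h.choose_spec.1, Or.inr h.choose_spec.2.2⟩⟩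
  else ⟨(Y, none), valid_none _ _⟩

variable (k Out) in
/-- the set of positions that player II's strategy is willing to choose -/
def US (r : Set T.N → Option T.N) : Set T.N :=
  {u | u ∈ FO T k Out ∧ ∃ Y, u ∈ Y ∧ r Y = some u}

noncomputable def UY (r : Set T.N → Option T.N) (u : T.N) : Set T.N :=
  if h : ∃ Y, u ∈ Y ∧ r Y = some u then h.choose else ∅

lemma UY_spec {r : Set T.N → Option T.N} {u : T.N} (h : u ∈ US k Out r) :
    u ∈ UY r u ∧ r (UY r u) = some u := by
  rw [UY, dif_pos h.2]; exact h.2.choose_spec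

variable (k Out) in
noncomputable def gII (p : T.N) (r : Set T.N → Option T.N) : Guess T k Out p :=
  if h : ∃ v, v ∈ US k Out r ∧ T.le v p then
    ⟨(UY r h.choose, some h.choose), by
      intro u hu
      cases hu
      exact ⟨(UY_spec h.choose_spec.1).1, h.choose_spec.1.1, Or.inr h.choose_spec.2⟩⟩
  else ⟨((US k Out r)ᶜ, none), valid_none _ _⟩

noncomputable def mkG (p : T.N) (g : Guess T k Out p) : UN T k Out :=
  mk p g.1.1 g.1.2 (fun _ => g.2)

noncomputable def YI (σ : Strat (UT k hOut)) (p : T.N) : Set T.N :=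
  UN.Y (T := T) (k := k) (Out := Out) (σ.f (mk (T.anc p k) ∅ none (fun _ => valid_none _ _)))

noncomputable def rII (σ : Strat (UT k hOut)) (p : T.N) (Y : Set T.N) : Option T.N :=
  UN.c (T := T) (k := k) (Out := Out)
    (σ.f (mk (T.anc p (k+1)) Y none (fun _ => valid_none _ _)))

noncomputable def guess (i : Bool) (σ : Strat (UT k hOut)) (p : T.N) : Guess T k Out p :=
  if i then gII k Out p (rII hOut σ p) else gI k Out p (YI hOut σ p)

noncomputable def uφ (i : Bool) (σ : Strat (UT k hOut)) : Strat T where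
  f p := UN.p (T := T) (k := k) (Out := Out) (σ.f (mkG p (guess hOut i σ p)))
  lev_f p := σ.lev_f _
  par_f p := congrArg UN.p (σ.par_f (mkG p (guess hOut i σ p)))

lemma guess_loc (i : Bool) (σ τ : Strat (UT k hOut)) (n : ℕ)
    (h : ∀ p, (UT k hOut).lev p < n → σ.f p = τ.f p) (p : T.N) (hp : T.lev p < n) :
    guess hOut i σ p = guess hOut i τ p := by
  have h1 : YI hOut σ p = YI hOut τ p := by
    refine congrArg UN.Y (h _ ?_)
    change T.lev (T.anc p k) < n
    rw [T.lev_anc]; omega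
  have h2 : rII hOut σ p = rII hOut τ p := by
    funext Y
    refine congrArg UN.c (h _ ?_)
    change T.lev (T.anc p (k+1)) < n
    rw [T.lev_anc]; omega
  unfold guess
  rw [h1, h2]

lemma r_of_c {x : ℕ → T.N} (hx : Play T x) {r : UN T k Out} {m n : ℕ} (hr : r.c = some (x m))
    (hl : T.lev r.p = n + 1) (hn : n < m) : r.p = x (n+1) := by
  rcases (r.hu _ hr).2.2 with h | h
  · rw [hx.eq_of_le h, hl]
  · have h1 := T.le_lev h
    rw [(hx m).1, hl] at h1
    have h2 : m = n + 1 := by omega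
    rw [← h2]
    exact (T.eq_of_le h (T.le_refl _) (by rw [(hx m).1, hl, h2])).symm

lemma mk_trunc {p : T.N} {Y Y' : Set T.N} {c c' : Option T.N}
    {h : k + 1 < T.lev p → Valid T k Out p Y c} {h' : k + 1 < T.lev p → Valid T k Out p Y' c'}
    (hp : T.lev p ≤ k) : mk p Y c h = mk p Y' c' h' := by
  apply UN.ext
  · rfl
  · rw [UN.hY _ hp, UN.hY _ hp]
  · rw [UN.hc, UN.hc] <;> exact hp.trans (Nat.le_succ k)

lemma mk_trunc1 {p : T.N} {Y : Set T.N} {c c' : Option T.N}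
    {h : k + 1 < T.lev p → Valid T k Out p Y c} {h' : k + 1 < T.lev p → Valid T k Out p Y c'}
    (hp : T.lev p ≤ k + 1) : mk p Y c h = mk p Y c' h' := by
  apply UN.ext
  · rfl
  · rfl
  · rw [UN.hc, UN.hc] <;> exact hp

lemma valid_some {x : ℕ → T.N} (hx : Play T x) {Y : Set T.N} {m : ℕ} (h1 : x m ∈ FO T k Out)
    (h2 : x m ∈ Y) (n : ℕ) : Valid T k Out (x n) Y (some (x m)) := by
  intro u hu
  cases hu
  refine ⟨h2, h1, ?_⟩
  rcases Nat.le_total n m with h | h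
  · exact Or.inl (hx.le h)
  · exact Or.inr (hx.le h)

/-- the strategy-following condition for a lift, with a general choice -/
lemma lift_cons_some {x : ℕ → T.N} (hx : Play T x) (i : Bool) (σ : Strat (UT k hOut))
    (hc : Cons T i (uφ hOut i σ) x) {Y : Set T.N} {m : ℕ} (h1 : x m ∈ FO T k Out)
    (h2 : x m ∈ Y)
    (hg : ∀ n, m ≤ n → (guess hOut i σ (x n)).1 = (Y, some (x m)))
    (hk : k.bodd = i → UN.Y (T := T) (k := k) (Out := Out)
      (σ.f (mk (x k) Y none (fun _ => valid_none _ _))) = Y)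
    (hk1 : (k+1).bodd = i → UN.c (T := T) (k := k) (Out := Out)
      (σ.f (mk (x (k+1)) Y none (fun _ => valid_none _ _))) = some (x m)) :
    Cons (UT k hOut) i σ
      (fun n => mk (x n) Y (some (x m)) (fun _ => valid_some hx h1 h2 n)) := by
  intro n hn
  have hm : k + 2 < m := by have := h1.2.2; rwa [(hx m).1] at this
  have hs := hc n hn
  have ek : mk (x k) Y (some (x m)) (fun _ => valid_some hx h1 h2 k) =
      mk (x k) Y none (fun _ => valid_none _ _) := mk_trunc (hx k).1.le
  have ek1 : mk (x (k+1)) Y (some (x m)) (fun _ => valid_some hx h1 h2 (k+1)) =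
      mk (x (k+1)) Y none (fun _ => valid_none _ _) := mk_trunc1 (hx (k+1)).1.le
  have hpar := σ.par_f (mk (x n) Y (some (x m)) (fun _ => valid_some hx h1 h2 n))
  have hlev := σ.lev_f (mk (x n) Y (some (x m)) (fun _ => valid_some hx h1 h2 n))
  have hlev' : T.lev (UN.p (T := T) (k := k) (Out := Out)
    (σ.f (mk (x n) Y (some (x m)) (fun _ => valid_some hx h1 h2 n)))) = n + 1 := by
    refine hlev.trans ?_
    change T.lev (x n) + 1 = n + 1
    rw [(hx n).1]
  refine lift_step hx Y (some (x m)) (valid_some hx h1 h2) n _ hpar ?_ ?_ ?_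
  · rcases Nat.lt_or_ge n m with h | h
    · rcases Nat.lt_or_ge k n with h3 | h3
      · refine r_of_c hx ?_ hlev' h
        rcases eq_or_ne n (k+1) with h4 | h4
        · subst h4
          refine Eq.trans ?_ (hk1 hn)
          exact congrArg (fun q => UN.c (T := T) (k := k) (Out := Out) (σ.f q)) ek1
        · refine (upar_c (T := T) (k := k) (Out := Out) (q := σ.f _)
            (lt_of_lt_of_eq (by omega) hlev'.symm)).symm.trans ?_
          refine (congrArg UN.c hpar).trans ?_
          exact mk_c (by rw [(hx n).1]; omega)
      · rw [hs]
        refine congrArg (fun q => UN.p (T := T) (k := k) (Out := Out) (σ.f q)) ?_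
        exact mk_trunc (by rw [(hx n).1]; omega)
    · rw [hs]
      refine congrArg (fun q => UN.p (T := T) (k := k) (Out := Out) (σ.f q)) ?_
      have := hg n h
      apply UN.ext
      · rfl
      · simp only [mkG, mk, this]
      · simp only [mkG, mk, this]
  · rintro rfl
    refine Eq.trans ?_ (hk hn)
    exact congrArg (fun q => UN.Y (T := T) (k := n) (Out := Out) (σ.f q)) ek
  · rintro rfl
    refine Eq.trans ?_ (hk1 hn)
    exact congrArg (fun q => UN.c (T := T) (k := k) (Out := Out) (σ.f q)) ek1

lemma lift_cons_none {x : ℕ → T.N} (hx : Play T x) (i : Bool) (σ : Strat (UT k hOut))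
    (hc : Cons T i (uφ hOut i σ) x) {Y : Set T.N}
    (hg : ∀ n, k < n → (guess hOut i σ (x n)).1 = (Y, none))
    (hk : k.bodd = i → UN.Y (T := T) (k := k) (Out := Out)
      (σ.f (mk (x k) Y none (fun _ => valid_none _ _))) = Y)
    (hk1 : (k+1).bodd = i → UN.c (T := T) (k := k) (Out := Out)
      (σ.f (mk (x (k+1)) Y none (fun _ => valid_none _ _))) = none) :
    Cons (UT k hOut) i σ
      (fun n => mk (x n) Y none (fun _ => valid_none _ _)) := by
  intro n hn
  have hs := hc n hn
  have hpar := σ.par_f (mk (x n) Y none (fun _ => valid_none _ _))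
  refine lift_step hx Y none (fun n => valid_none _ _) n _ hpar ?_ ?_ ?_
  · rw [hs]
    refine congrArg (fun q => UN.p (T := T) (k := k) (Out := Out) (σ.f q)) ?_
    rcases Nat.lt_or_ge k n with h3 | h3
    · have := hg n h3
      apply UN.ext
      · rfl
      · simp only [mkG, mk, this]
      · simp only [mkG, mk, this]
    · exact mk_trunc (by rw [(hx n).1]; omega)
  · rintro rfl
    exact hk hn
  · rintro rfl
    exact hk1 hn

lemma st_some {x : ℕ → T.N} (hx : Play T x) {Y : Set T.N} {m : ℕ} (h1 : x m ∈ FO T k Out)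
    (h2 : x m ∈ Y) (n : ℕ) :
    ust (mk (x n) Y (some (x m)) (fun _ => valid_some hx h1 h2 n)) = T.st (x n) := by
  rw [ust_nov]
  · rfl
  · intro v hv
    have h3 := T.le_lev hv.2.2.1
    have h4 := hv.2.1.2.2
    have h5 : T.lev v ≤ T.lev (x n) := h3
    have h6 := hv.1
    rw [mk_c (by omega)] at h6
    cases h6

lemma lift_none {x : ℕ → T.N} (hx : Play T x) (i : Bool) (Y : Set T.N)
    (hY : ∀ m, x m ∈ FO T k Out → decide (x m ∈ Y) = i) :
    Lift (UT k hOut) T UN.p k i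
      (fun n => mk (k := k) (Out := Out) (x n) Y none (fun _ => valid_none _ _)) x := by
  by_cases h : ∃ m, x m ∈ FO T k Out ∧ T.st (x m) = none
  · obtain ⟨m, hm, hs⟩ := h
    have h3 := hm.2.2
    right
    refine ⟨m, ?_, ?_, rfl⟩
    · rw [(hx m).1] at h3; omega
    · refine (ust_viol hOut (v := x m) ⟨?_, hm, T.le_refl _, hs⟩).trans ?_
      · exact mk_c (by omega)
      · rw [mk_Y (by omega), hY m hm]
  · left
    intro n
    refine ⟨rfl, ?_⟩
    refine ust_nov ?_
    intro v hv
    apply h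
    have h3 : T.le v (x n) := hv.2.2.1
    have h4 := hx.eq_of_le h3
    refine ⟨T.lev v, ?_⟩
    rw [← h4]
    exact ⟨hv.2.1, hv.2.2.2⟩

lemma ulift (hk : k.bodd = false) (i : Bool) (σ : Strat (UT k hOut)) (x : ℕ → T.N)
    (hx : Play T x) (hc : Cons T i (uφ hOut i σ) x) :
    ∃ y, Play (UT k hOut) y ∧ Cons (UT k hOut) i σ y ∧ Lift (UT k hOut) T UN.p k i y x := by
  have hk1 : (k+1).bodd = true := by simp [hk]
  cases i with
  | false =>
    set Y := YI hOut σ (x k) with hYdef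
    have hYn : ∀ n, k ≤ n → YI hOut σ (x n) = Y := by
      intro n hn
      have : T.anc (x n) k = T.anc (x k) k := by rw [hx.anc hn, hx.anc le_rfl]
      rw [hYdef]; unfold YI
      simp only [this]
    have hYk : ∀ Y', UN.Y (T := T) (k := k) (Out := Out)
        (σ.f (mk (x k) Y' none (fun _ => valid_none _ _))) = Y := by
      intro Y'
      have e : mk (k := k) (Out := Out) (x k) Y' none (fun _ => valid_none _ _) =
        mk (T.anc (x k) k) ∅ none (fun _ => valid_none _ _) := by
        simp only [hx.anc le_rfl]
        exact mk_trunc (hx k).1.le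
      exact congrArg (fun q => UN.Y (T := T) (k := k) (Out := Out) (σ.f q)) e
    by_cases h : ∃ m, x m ∈ FO T k Out ∧ x m ∈ Y
    · obtain ⟨m, h1, h2⟩ := h
      have hm : k + 2 < m := by have := h1.2.2; rwa [(hx m).1] at this
      refine ⟨_, lift_play hOut hx Y (some (x m)) (valid_some hx h1 h2),
        lift_cons_some hOut hx false σ hc h1 h2 ?_ (fun _ => hYk Y) (by simp [hk]), ?_⟩
      · intro n hn
        have hex : ∃ v, v ∈ FO T k Out ∧ v ∈ Y ∧ T.le v (x n) := ⟨x m, h1, h2, hx.le hn⟩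
        have e : guess hOut false σ (x n) = gI k Out (x n) Y := by
          unfold guess
          rw [if_neg (by simp), hYn n (by omega)]
        rw [e]; refine (congrArg Subtype.val (dif_pos hex)).trans ?_
        have : hex.choose = x m :=
          FO_unique hOut hex.choose_spec.1 h1 hex.choose_spec.2.2 (hx.le hn)
        simp only [this]
      · exact Or.inl fun n => ⟨rfl, st_some hx h1 h2 n⟩
    · refine ⟨_, lift_play hOut hx Y none (fun n => valid_none _ _),
        lift_cons_none hOut hx false σ hc ?_ (fun _ => hYk Y) (by simp [hk]),
        lift_none hOut hx false Y ?_⟩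
      · intro n hn
        have e : guess hOut false σ (x n) = gI k Out (x n) Y := by
          unfold guess
          rw [if_neg (by simp), hYn n (by omega)]
        rw [e]; refine congrArg Subtype.val (dif_neg ?_)
        rintro ⟨v, h1, h2, h3⟩
        have := hx.eq_of_le h3
        exact h ⟨T.lev v, by rw [← this]; exact h1, by rw [← this]; exact h2⟩
      · intro m hm
        simp only [decide_eq_false_iff_not]
        exact fun h' => h ⟨m, hm, h'⟩
  | true =>
    set r := rII hOut σ (x (k+1)) with hrdef
    have hrn : ∀ n, k + 1 ≤ n → rII hOut σ (x n) = r := by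
      intro n hn
      have : T.anc (x n) (k+1) = T.anc (x (k+1)) (k+1) := by rw [hx.anc hn, hx.anc le_rfl]
      rw [hrdef]; unfold rII
      simp only [this]
    have hrk : ∀ Y, UN.c (T := T) (k := k) (Out := Out)
        (σ.f (mk (x (k+1)) Y none (fun _ => valid_none _ _))) = r Y := by
      intro Y'
      have e : mk (k := k) (Out := Out) (x (k+1)) Y' none (fun _ => valid_none _ _) =
        mk (T.anc (x (k+1)) (k+1)) Y' none (fun _ => valid_none _ _) := by
        simp only [hx.anc le_rfl]
      exact congrArg (fun q => UN.c (T := T) (k := k) (Out := Out) (σ.f q)) e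
    by_cases h : ∃ m, x m ∈ US k Out r
    · obtain ⟨m, h1⟩ := h
      have hm : k + 2 < m := by have := h1.1.2.2; rwa [(hx m).1] at this
      obtain ⟨h2, h3⟩ := UY_spec h1
      refine ⟨_, lift_play hOut hx (UY r (x m)) (some (x m)) (valid_some hx h1.1 h2),
        lift_cons_some hOut hx true σ hc h1.1 h2 ?_ (by simp [hk])
          (fun _ => (hrk _).trans h3), ?_⟩
      · intro n hn
        have hex : ∃ v, v ∈ US k Out r ∧ T.le v (x n) := ⟨x m, h1, hx.le hn⟩
        have e : guess hOut true σ (x n) = gII k Out (x n) r := by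
          unfold guess
          rw [if_pos rfl, hrn n (by omega)]
        rw [e]; refine (congrArg Subtype.val (dif_pos hex)).trans ?_
        have : hex.choose = x m :=
          FO_unique hOut hex.choose_spec.1.1 h1.1 hex.choose_spec.2 (hx.le hn)
        simp only [this]
      · exact Or.inl fun n => ⟨rfl, st_some hx h1.1 h2 n⟩
    · refine ⟨_, lift_play hOut hx (US k Out r)ᶜ none (fun n => valid_none _ _),
        lift_cons_none hOut hx true σ hc ?_ (by simp [hk]) ?_,
        lift_none hOut hx true _ ?_⟩
      · intro n hn
        have e : guess hOut true σ (x n) = gII k Out (x n) r := by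
          unfold guess
          rw [if_pos rfl, hrn n (by omega)]
        rw [e]; refine congrArg Subtype.val (dif_neg ?_)
        rintro ⟨v, h1, h3⟩
        have := hx.eq_of_le h3
        exact h ⟨T.lev v, by rw [← this]; exact h1⟩
      · intro _
        rw [hrk]
        by_contra hne
        obtain ⟨v, hv⟩ := Option.ne_none_iff_exists'.mp hne
        have hv' := (hrk (US k Out r)ᶜ).trans hv
        have hvv := UN.hu (T := T) (k := k) (Out := Out) _ v hv'
        have hpY : UN.Y (T := T) (k := k) (Out := Out)
            (σ.f (mk (x (k+1)) (US k Out r)ᶜ none (fun _ => valid_none _ _))) =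
            (US k Out r)ᶜ := by
          have hpar := σ.par_f (mk (x (k+1)) (US k Out r)ᶜ none (fun _ => valid_none _ _))
          have hlev := σ.lev_f (mk (x (k+1)) (US k Out r)ᶜ none (fun _ => valid_none _ _))
          have e1 : T.lev (UN.p (T := T) (k := k) (Out := Out)
            (σ.f (mk (x (k+1)) (US k Out r)ᶜ none (fun _ => valid_none _ _)))) = k + 2 := by
            refine hlev.trans ?_
            change T.lev (x (k+1)) + 1 = k + 2
            rw [(hx (k+1)).1]
          refine (upar_Y (T := T) (k := k) (Out := Out) (q := σ.f _)
            (lt_of_lt_of_eq (by omega) e1.symm)).symm.trans ?_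
          refine (congrArg UN.Y hpar).trans ?_
          exact mk_Y (by rw [(hx _).1]; omega)
        have hmem := hvv.1
        rw [hpY] at hmem
        exact hmem ⟨hvv.2.1, _, hmem, hv⟩
      · intro m hm
        simp only [decide_eq_true_eq]
        exact fun h' => h ⟨m, h'⟩

noncomputable def ucover (hk : k.bodd = false) : Cover (UT k hOut) T k where
  f := UN.p
  lev_f q := rfl
  par_f q := rfl
  st_f q h := by
    change ust q ≠ none
    unfold ust
    split_ifs
    · simp
    · exact h
  inj p q hp h := by
    have h' : UN.p p = UN.p q := h
    have hp' : T.lev (UN.p p) ≤ k := hp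
    apply UN.ext h'
    · rw [UN.hY p hp', UN.hY q (by rw [← h']; exact hp')]
    · rw [UN.hc p (by omega), UN.hc q (by rw [← h']; omega)]
  surj p hp := ⟨mk p ∅ none (fun _ => valid_none _ _), rfl⟩
  st_eq q hq := by
    refine ust_nov ?_
    intro v hv
    have h1 := T.le_lev hv.2.2.1
    have h2 := hv.2.1.2.2
    have h3 : T.lev (UN.p q) ≤ k := hq
    omega
  φ := uφ hOut
  loc i σ τ n h p hp := by
    change UN.p (T := T) (k := k) (Out := Out) _ = UN.p (T := T) (k := k) (Out := Out) _
    rw [guess_loc hOut i σ τ n h p hp]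
    exact congrArg UN.p (h _ hp)
  agree i σ p hp := by
    have hp' : T.lev (UN.p p) < k := hp
    refine congrArg (fun q => UN.p (T := T) (k := k) (Out := Out) (σ.f q)) ?_
    apply UN.ext
    · rfl
    · rw [UN.hY p (by omega), UN.hY]
      exact hp'.le
    · rw [UN.hc p (by omega), UN.hc]
      change T.lev (UN.p p) ≤ k + 1
      omega
  lift := ulift hOut hk

/-- The key lemma: open sets can be unravelled. -/
theorem unravel_open (T : GTree.{u}) (k : ℕ) (Out : Set T.N)
    (hOut : ∀ p, T.par p ∈ Out → p ∈ Out) :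
    ∃ (S : GTree.{u}) (C : Cover S T k) (n : ℕ) (P : Set S.N), ∀ x, Play S x →
      (∀ m, S.st (x m) = none) → ((∃ m, C.f (x m) ∈ Out) ↔ x n ∈ P) := by
  have hk : (2 * k).bodd = false := by simp
  refine ⟨UT (2*k) hOut, (ucover hOut hk).weaken (by omega), 2 * k + 2,
    {q | UN.p q ∈ Out ∨ UN.c q ≠ none}, ?_⟩
  intro x hx hst
  have hX := (ucover hOut hk).toHom.play hx
  change Play T (fun n => UN.p (x n)) at hX
  have hcc : ∀ n, 2*k+2 ≤ n → UN.c (x n) = UN.c (x (2*k+2)) := by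
    intro n hn
    induction n, hn using Nat.le_induction with
    | base => rfl
    | succ n hn ih =>
      refine Eq.trans ?_ ih
      have h1 : upar (x (n+1)) = x n := (hx n).2
      have h2 : T.lev (UN.p (x (n+1))) = n + 1 := (hx (n+1)).1
      exact (upar_c (T := T) (Out := Out) (q := x (n+1)) (by omega)).symm.trans
        (congrArg UN.c h1)
  change (∃ m, UN.p (x m) ∈ Out) ↔ (UN.p (x (2*k+2)) ∈ Out ∨ UN.c (x (2*k+2)) ≠ none)
  constructor
  · intro hex
    by_contra hcon
    push Not at hcon
    obtain ⟨h1, h2⟩ := hcon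
    set m := Nat.find hex
    have hm := Nat.find_spec hex
    have hlt : 2 * k + 2 < m := by
      by_contra hle
      push Not at hle
      exact h1 (T.le_ind (P := fun p => p ∈ Out) hOut (hX.le hle) hm)
    have hpar : T.par (UN.p (x m)) ∉ Out := by
      have h3 := (hX (m-1)).2
      have h4 : m - 1 + 1 = m := by omega
      simp only [h4] at h3
      rw [h3]
      exact Nat.find_min hex (m := m - 1) (by omega)
    have hfo : UN.p (x m) ∈ FO T (2*k) Out := ⟨hm, hpar, by rw [(hX m).1]; exact hlt⟩
    have hv : Viol (x m) (UN.p (x m)) := ⟨by rw [hcc m hlt.le]; exact h2, hfo, T.le_refl _,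
      (ucover hOut hk).toHom.st_none (hst m)⟩
    have h5 := ust_viol hOut hv
    have h6 : ust (x m) = none := hst m
    rw [h6] at h5
    cases h5
  · rintro (h | h)
    · exact ⟨_, h⟩
    · obtain ⟨v, hv⟩ := Option.ne_none_iff_exists'.mp h
      obtain ⟨h1, h2, _⟩ := UN.hu _ v hv
      have h3 := h2.2.2
      have h4 : UN.c (x (T.lev v)) = some v := by rw [hcc _ (by omega), hv]
      have h5 := (UN.hu _ v h4).2.2
      have h6 : T.lev (UN.p (x (T.lev v))) = T.lev v := (hX _).1
      refine ⟨T.lev v, ?_⟩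
      rcases h5 with h5 | h5
      · rw [T.eq_of_le h5 (T.le_refl v) h6]; exact h2.1
      · rw [← T.eq_of_le h5 (T.le_refl _) h6.symm]; exact h2.1

end Unravel
end BD



namespace BD

section Limit

/-- Nodes of the inverse limit. -/
def Thr (T : ℕ → GTree.{u}) (K : ℕ → ℕ) (C : ∀ i, Cover (T (i+1)) (T i) (K i)) : Type u :=
  {t : ∀ i, (T i).N // ∀ i, (C i).f (t (i+1)) = t i}

lemma thr_exists (j : ℕ) : ∀ (T : ℕ → GTree.{u}) (K : ℕ → ℕ) (hK : Monotone K)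
    (C : ∀ i, Cover (T (i+1)) (T i) (K i)) (p : (T j).N), (T j).lev p ≤ K j →
    ∃ t : Thr T K C, t.1 j = p := by
  induction j with
  | zero =>
    intro T K hK C p hp
    have step : ∀ i (q : {q : (T i).N // (T i).lev q ≤ K 0}),
        ∃ r : {q : (T (i+1)).N // (T (i+1)).lev q ≤ K 0}, (C i).f r.1 = q.1 := by
      rintro i ⟨q, hq⟩
      obtain ⟨r, hr⟩ := (C i).surj q (hq.trans (hK (Nat.zero_le i)))
      refine ⟨⟨r, ?_⟩, hr⟩
      rw [← (C i).lev_f, hr]; exact hq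
    choose g hg using step
    let s : ∀ i, {q : (T i).N // (T i).lev q ≤ K 0} := fun i =>
      Nat.rec (motive := fun i => {q : (T i).N // (T i).lev q ≤ K 0}) ⟨p, hp⟩ (fun i q => g i q) i
    exact ⟨⟨fun i => (s i).1, fun i => hg i (s i)⟩, rfl⟩
  | succ j ih =>
    intro T K hK C p hp
    obtain ⟨t, ht⟩ := ih (fun i => T (i+1)) (fun i => K (i+1))
      (fun a b h => hK (Nat.succ_le_succ h)) (fun i => C (i+1)) p hp
    refine ⟨⟨fun i => Nat.casesOn i ((C 0).f (t.1 0)) (fun i => t.1 i), ?_⟩, ht⟩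
    intro i
    cases i with
    | zero => rfl
    | succ i => exact t.2 i

variable {T : ℕ → GTree.{u}} {K : ℕ → ℕ} (hK : Monotone K) (hK' : ∀ i, i ≤ K i)
  {C : ∀ i, Cover (T (i+1)) (T i) (K i)}

lemma thr_lev (t : Thr T K C) (i : ℕ) : (T i).lev (t.1 i) = (T 0).lev (t.1 0) := by
  induction i with
  | zero => rfl
  | succ i ih => rw [← (C i).lev_f, t.2 i, ih]

include hK in
lemma thr_ext {t s : Thr T K C} (j : ℕ) (h : t.1 j = s.1 j) (hl : (T 0).lev (t.1 0) ≤ K j) :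
    t = s := by
  have up : ∀ i, j ≤ i → t.1 i = s.1 i := by
    intro i hi
    induction i, hi using Nat.le_induction with
    | base => exact h
    | succ i hi ih =>
      apply (C i).inj
      · rw [thr_lev]; exact hl.trans (hK hi)
      · rw [t.2, s.2, ih]
  have down : ∀ i d, t.1 (i+d) = s.1 (i+d) → t.1 i = s.1 i := by
    intro i d
    induction d with
    | zero => exact fun h => h
    | succ d ih =>
      intro h
      apply ih
      rw [← t.2, ← s.2]
      exact congrArg _ h
  apply Subtype.ext
  funext i
  exact down i j (up _ (by omega))

def thr_par (t : Thr T K C) : Thr T K C :=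
  ⟨fun i => (T i).par (t.1 i), fun i => by rw [(C i).par_f, t.2]⟩

lemma st_up1 (t : Thr T K C) {j : ℕ} (h : (T 0).lev (t.1 0) ≤ K j) :
    (T (j+1)).st (t.1 (j+1)) = (T j).st (t.1 j) := by
  rw [(C j).st_eq _ (by rw [thr_lev]; exact h), t.2]

include hK in
lemma st_up (t : Thr T K C) {i j : ℕ} (h : (T 0).lev (t.1 0) ≤ K i) (hij : i ≤ j) :
    (T j).st (t.1 j) = (T i).st (t.1 i) := by
  induction j, hij using Nat.le_induction with
  | base => rfl
  | succ j hj ih => rw [st_up1 t (h.trans (hK hj)), ih]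

def tst (t : Thr T K C) : Option Bool := (T ((T 0).lev (t.1 0))).st (t.1 ((T 0).lev (t.1 0)))

include hK hK' in
lemma tst_eq (t : Thr T K C) {j : ℕ} (h : (T 0).lev (t.1 0) ≤ K j) :
    tst t = (T j).st (t.1 j) := by
  rw [tst]
  rcases Nat.le_total ((T 0).lev (t.1 0)) j with h1 | h1
  · exact (st_up hK t (hK' _) h1).symm
  · exact st_up hK t h h1

lemma tchild_exists (hK : Monotone K) (hK' : ∀ i, i ≤ K i) (t : Thr T K C) :
    ∃ s : Thr T K C, s.1 ((T 0).lev (t.1 0) + 1) =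
      (T ((T 0).lev (t.1 0) + 1)).child (t.1 ((T 0).lev (t.1 0) + 1)) := by
  apply thr_exists _ T K hK C
  rw [GTree.lev_child, thr_lev]
  exact hK' _

variable (C) in
noncomputable def TL : GTree.{u} where
  N := Thr T K C
  lev t := (T 0).lev (t.1 0)
  par := thr_par
  child t := (tchild_exists hK hK' t).choose
  st := tst
  lev_par t := (T 0).lev_par _
  lev_child t := by
    rw [← thr_lev _ ((T 0).lev (t.1 0) + 1), (tchild_exists hK hK' t).choose_spec,
      GTree.lev_child, thr_lev]
  par_child t := by
    apply thr_ext hK ((T 0).lev (t.1 0) + 1)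
    · change (T _).par ((tchild_exists hK hK' t).choose.1 _) = _
      rw [(tchild_exists hK hK' t).choose_spec, GTree.par_child]
    · rw [← thr_lev _ ((T 0).lev (t.1 0) + 1)]
      change (T _).lev ((T _).par ((tchild_exists hK hK' t).choose.1 _)) ≤ _
      rw [(tchild_exists hK hK' t).choose_spec, GTree.par_child, thr_lev]
      exact (Nat.le_succ _).trans (hK' _)
  st_mono t i h := by
    rw [tst_eq hK hK' _ (j := (T 0).lev (t.1 0)) (hK' _)]
    rw [tst_eq hK hK' _ (j := (T 0).lev (t.1 0))] at h
    · exact (T _).st_mono _ _ h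
    · change (T 0).lev ((T 0).par (t.1 0)) ≤ _
      rw [GTree.lev_par]
      exact (Nat.sub_le _ _).trans (hK' _)

lemma st_ne_up (t : Thr T K C) {i j : ℕ} (hij : i ≤ j) (h : (T i).st (t.1 i) ≠ none) :
    (T j).st (t.1 j) ≠ none := by
  induction j, hij using Nat.le_induction with
  | base => exact h
  | succ j hj ih =>
    apply (C j).st_f
    rw [t.2]; exact ih

variable (C) in
noncomputable def tpr (j : ℕ) : Hom (TL hK hK' C) (T j) where
  f t := Subtype.val (p := fun t : ∀ i, (T i).N => ∀ i, (C i).f (t (i+1)) = t i) t j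
  lev_f t := thr_lev t j
  par_f t := rfl
  st_f t h := by
    change tst t ≠ none
    rw [tst_eq hK hK' t (j := max j ((T 0).lev (Subtype.val (p := fun t : ∀ i, (T i).N => ∀ i, (C i).f (t (i+1)) = t i) t 0)))]
    · exact st_ne_up t (le_max_left _ _) h
    · exact (le_max_right _ _).trans (hK' _)

noncomputable def tex (hK : Monotone K) (C : ∀ i, Cover (T (i+1)) (T i) (K i))
    (j : ℕ) (p : (T j).N) (hp : (T j).lev p ≤ K j) : Thr T K C :=
  (thr_exists j T K hK C p hp).choose

lemma tex_spec (j : ℕ) (p : (T j).N) (hp : (T j).lev p ≤ K j) : (tex hK C j p hp).1 j = p :=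
  (thr_exists j T K hK C p hp).choose_spec

/-- apply a strategy on the limit tree -/
def sap (σ : Strat (TL hK hK' C)) (t : Thr T K C) : Thr T K C := σ.f t

lemma sap_lev (σ : Strat (TL hK hK' C)) (t : Thr T K C) :
    (T 0).lev ((sap hK hK' σ t).1 0) = (T 0).lev (t.1 0) + 1 := σ.lev_f t

lemma sap_par (σ : Strat (TL hK hK' C)) (t : Thr T K C) (j : ℕ) :
    (T j).par ((sap hK hK' σ t).1 j) = t.1 j :=
  congrArg (fun s : Thr T K C => s.1 j) (σ.par_f t)

noncomputable def tau (σ : Strat (TL hK hK' C)) (j : ℕ) : Strat (T j) where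
  f p := if h : (T j).lev p ≤ K j then (sap hK hK' σ (tex hK C j p h)).1 j else (T j).child p
  lev_f p := by
    split_ifs with h
    · rw [thr_lev, sap_lev, ← thr_lev _ j, tex_spec]
    · rw [GTree.lev_child]
  par_f p := by
    split_ifs with h
    · rw [sap_par, tex_spec]
    · rw [GTree.par_child]

lemma tau_thr (σ : Strat (TL hK hK' C)) (j : ℕ) (t : Thr T K C)
    (h : (T 0).lev (t.1 0) ≤ K j) : (tau hK hK' σ j).f (t.1 j) = (sap hK hK' σ t).1 j := by
  have h' : (T j).lev (t.1 j) ≤ K j := by rw [thr_lev]; exact h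
  have e : tex hK C j (t.1 j) h' = t := by
    apply thr_ext hK j
    · rw [tex_spec]
    · rw [← thr_lev _ j, tex_spec]; exact h'
  change dite _ _ _ = _
  rw [dif_pos h', e]

noncomputable def tapp (b : Bool) (σ : Strat (TL hK hK' C)) : ℕ → ∀ i, Strat (T i)
  | 0, i => tau hK hK' σ i
  | m+1, i => (C i).φ b (tapp b σ m (i+1))

lemma tapp_step (b : Bool) (σ : Strat (TL hK hK' C)) (m : ℕ) : ∀ (i : ℕ) (p : (T i).N),
    (T i).lev p < K (i+m) → (tapp hK hK' b σ (m+1) i).f p = (tapp hK hK' b σ m i).f p := by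
  induction m with
  | zero =>
    intro i p hp
    have hp' : (T i).lev p < K i := hp
    have hspec := tex_spec hK (C := C) i p hp'.le
    set t := tex hK C i p hp'.le with ht
    have hl : (T 0).lev (t.1 0) < K i := by rw [← thr_lev t i, hspec]; exact hp'
    rw [← hspec]
    change ((C i).φ b (tau hK hK' σ (i+1))).f (t.1 i) = (tau hK hK' σ i).f (t.1 i)
    rw [tau_thr hK hK' σ i t hl.le, ← t.2 i, (C i).agree, tau_thr]
    · exact (sap hK hK' σ t).2 i
    · exact hl.le.trans (hK (Nat.le_succ i))
    · rw [thr_lev]; exact hl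
  | succ m ih =>
    intro i p hp
    apply (C i).loc b _ _ (K (i+(m+1)))
    · intro q hq
      apply ih
      rw [show i + 1 + m = i + (m+1) by omega]; exact hq
    · exact hp

include hK in
lemma tapp_stab (b : Bool) (σ : Strat (TL hK hK' C)) {m m' : ℕ} (hm : m ≤ m') (i : ℕ)
    (p : (T i).N) (hp : (T i).lev p < K (i+m)) :
    (tapp hK hK' b σ m' i).f p = (tapp hK hK' b σ m i).f p := by
  induction m', hm using Nat.le_induction with
  | base => rfl
  | succ m' hm' ih =>
    rw [tapp_step, ih]
    exact hp.trans_le (hK (by omega))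

lemma tapp_loc (b : Bool) (σ τ : Strat (TL hK hK' C)) (n : ℕ)
    (h : ∀ t : Thr T K C, (T 0).lev (t.1 0) < n → sap hK hK' σ t = sap hK hK' τ t) (m : ℕ) :
    ∀ (i : ℕ) (p : (T i).N), (T i).lev p < n →
      (tapp hK hK' b σ m i).f p = (tapp hK hK' b τ m i).f p := by
  induction m with
  | zero =>
    intro i p hp
    change dite _ _ _ = dite _ _ _
    by_cases h1 : (T i).lev p ≤ K i
    · rw [dif_pos h1, dif_pos h1, h]
      rw [← thr_lev _ i, tex_spec]; exact hp
    · rw [dif_neg h1, dif_neg h1]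
  | succ m ih =>
    intro i p hp
    exact (C i).loc b _ _ n (fun q hq => ih (i+1) q hq) p hp

noncomputable def tsig (b : Bool) (σ : Strat (TL hK hK' C)) (i : ℕ) : Strat (T i) where
  f p := (tapp hK hK' b σ ((T i).lev p + 1) i).f p
  lev_f p := Strat.lev_f _ _
  par_f p := Strat.par_f _ _

lemma tsig_eq (b : Bool) (σ : Strat (TL hK hK' C)) {m i : ℕ} {p : (T i).N}
    (h : (T i).lev p < m) : (tsig hK hK' b σ i).f p = (tapp hK hK' b σ m i).f p := by
  refine (tapp_stab hK hK' b σ (Nat.succ_le_of_lt h) i p ?_).symm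
  exact lt_of_lt_of_le (by omega) (hK' _)

lemma tsig_thr (b : Bool) (σ : Strat (TL hK hK' C)) (i : ℕ) (t : Thr T K C)
    (h : (T 0).lev (t.1 0) < K i) : (tsig hK hK' b σ i).f (t.1 i) = (sap hK hK' σ t).1 i := by
  rw [tsig_eq hK hK' b σ (Nat.lt_succ_self _),
    tapp_stab hK hK' b σ (Nat.zero_le _) i _ (by rw [thr_lev]; exact h)]
  exact tau_thr hK hK' σ i t h.le

lemma tsig_phi (b : Bool) (σ : Strat (TL hK hK' C)) (i : ℕ) :
    (C i).φ b (tsig hK hK' b σ (i+1)) = tsig hK hK' b σ i := by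
  apply Strat.ext
  funext p
  rw [tsig_eq hK hK' b σ (m := (T i).lev p + 2) (by omega)]
  refine (C i).loc b _ _ ((T i).lev p + 1) ?_ p (by omega)
  intro q hq
  exact tsig_eq hK hK' b σ hq

variable (C) in
def tG : ∀ j, Hom (T j) (T 0)
  | 0 => Hom.id _
  | j+1 => (tG j).comp (C j).toHom

lemma tG_thr (t : Thr T K C) (j : ℕ) : (tG C j).f (t.1 j) = t.1 0 := by
  induction j with
  | zero => rfl
  | succ j ih =>
    change (tG C j).f ((C j).f (t.1 (j+1))) = _
    rw [t.2, ih]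

lemma tlift (b : Bool) (σ : Strat (TL hK hK' C)) (x : ℕ → (T 0).N) (hx : Play (T 0) x)
    (hc : Cons (T 0) b (tsig hK hK' b σ 0) x) :
    ∃ y, Play (TL hK hK' C) y ∧ Cons (TL hK hK' C) b σ y ∧
      Lift (TL hK hK' C) (T 0) (tpr hK hK' C 0).f (K 0) b y x := by
  have step : ∀ i (z : {z : ℕ → (T i).N // Play (T i) z ∧ Cons (T i) b (tsig hK hK' b σ i) z}),
      ∃ w : {z : ℕ → (T (i+1)).N // Play (T (i+1)) z ∧ Cons (T (i+1)) b (tsig hK hK' b σ (i+1)) z},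
        Lift (T (i+1)) (T i) (C i).f (K i) b w.1 z.1 := by
    rintro i ⟨z, hz, hzc⟩
    rw [← tsig_phi] at hzc
    obtain ⟨w, h1, h2, h3⟩ := (C i).lift b _ z hz hzc
    exact ⟨⟨w, h1, h2⟩, h3⟩
  choose g hg using step
  let s : ∀ i, {z : ℕ → (T i).N // Play (T i) z ∧ Cons (T i) b (tsig hK hK' b σ i) z} := fun i =>
    Nat.rec (motive := fun i =>
      {z : ℕ → (T i).N // Play (T i) z ∧ Cons (T i) b (tsig hK hK' b σ i) z})
      ⟨x, hx, hc⟩ (fun i q => g i q) i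
  have hs0 : (s 0).1 = x := rfl
  have hsl : ∀ i, Lift (T (i+1)) (T i) (C i).f (K i) b (s (i+1)).1 (s i).1 := fun i => hg i (s i)
  have hp : ∀ i, Play (T i) (s i).1 := fun i => (s i).2.1
  have hcs : ∀ i, Cons (T i) b (tsig hK hK' b σ i) (s i).1 := fun i => (s i).2.2
  clear_value s
  have hD : ∀ i m, m ≤ K i → (C i).f ((s (i+1)).1 m) = (s i).1 m := by
    intro i m hm
    rcases hsl i with h | ⟨n, hn, h1, h2⟩
    · exact (h m).1
    · exact (C i).toHom.eq_le (hp _) (hp _) (hm.trans hn) h2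
  have hthr : ∀ m, ∃ t : Thr T K C, ∀ j, m ≤ K j → t.1 j = (s j).1 m := by
    intro m
    have hex : ∃ j, m ≤ K j := ⟨m, hK' m⟩
    have hspec := Nat.find_spec hex
    obtain ⟨t, ht⟩ := thr_exists (Nat.find hex) T K hK C ((s (Nat.find hex)).1 m)
      (by rw [(hp _ m).1]; exact hspec)
    refine ⟨t, ?_⟩
    intro j hj
    have hle : Nat.find hex ≤ j := Nat.find_min' hex hj
    clear hj
    induction j, hle using Nat.le_induction with
    | base => exact ht
    | succ j hj ih =>
      have hmj : m ≤ K j := hspec.trans (hK hj)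
      apply (C j).inj
      · rw [← (C j).lev_f, t.2, ih, (hp _ m).1]; exact hmj
      · rw [t.2, ih, hD j m hmj]
  choose y hy using hthr
  have hylev : ∀ m, (T 0).lev ((y m).1 0) = m := by
    intro m
    rw [← thr_lev _ m, hy m m (hK' m), (hp m m).1]
  have hyP : Play (TL hK hK' C) y := by
    intro m
    refine ⟨hylev m, ?_⟩
    change thr_par (y (m+1)) = y m
    apply thr_ext hK (m+1)
    · change (T (m+1)).par ((y (m+1)).1 (m+1)) = _
      rw [hy _ _ (hK' _), hy m (m+1) ((Nat.le_succ m).trans (hK' _)), (hp _ m).2]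
    · change (T 0).lev ((T 0).par ((y (m+1)).1 0)) ≤ _
      rw [GTree.lev_par, hylev]
      exact (Nat.sub_le _ _).trans (hK' _)
  have hyC : Cons (TL hK hK' C) b σ y := by
    intro m hm
    have hlt : m < K (m+1) := lt_of_lt_of_le (Nat.lt_succ_self m) (hK' _)
    change y (m+1) = sap hK hK' σ (y m)
    apply thr_ext hK (m+1)
    · rw [← tsig_thr hK hK' b σ _ _ (by rw [hylev]; exact hlt), hy _ _ (hK' _),
        hy m (m+1) hlt.le, ← hcs (m+1) m hm]
    · rw [hylev]; exact hK' _
  refine ⟨y, hyP, hyC, ?_⟩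
  have hst : ∀ m j, m ≤ K j → tst (y m) = (T j).st ((s j).1 m) := by
    intro m j h
    rw [tst_eq hK hK' (y m) (j := j) (by rw [hylev]; exact h), hy m j h]
  have h0 : ∀ m j, m ≤ K j → (y m).1 0 = (tG C j).f ((s j).1 m) := by
    intro m j h
    rw [← tG_thr (y m) j, hy m j h]
  let A : ℕ → Prop := fun j => ∀ n, (tG C j).f ((s j).1 n) = x n ∧
    (T j).st ((s j).1 n) = (T 0).st (x n)
  let B : ℕ → ℕ → Prop := fun j n => K 0 ≤ n ∧ (T j).st ((s j).1 n) = some b ∧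
    (tG C j).f ((s j).1 n) = x n
  have hAA : ∀ j, A j → A (j+1) ∨ ∃ n, B (j+1) n := by
    intro j hA
    rcases hsl j with h | ⟨n, hn, h1, h2⟩
    · refine Or.inl fun n => ⟨?_, ?_⟩
      · change (tG C j).f ((C j).f ((s (j+1)).1 n)) = x n
        rw [(h n).1, (hA n).1]
      · rw [(h n).2, (hA n).2]
    · refine Or.inr ⟨n, (hK (Nat.zero_le j)).trans hn, h1, ?_⟩
      change (tG C j).f ((C j).f ((s (j+1)).1 n)) = x n
      rw [h2, (hA n).1]
  have hBB : ∀ j n, B j n → ∃ n', n' ≤ n ∧ B (j+1) n' := by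
    rintro j n ⟨h1, h2, h3⟩
    obtain ⟨n', hn', hk, h4, h5⟩ := Lift.persist (C j).toHom (hp _) (hp _) (hsl j) h2
    refine ⟨n', hn', ?_, h4, ?_⟩
    · rcases hk with rfl | hk
      · exact h1
      · exact (hK (Nat.zero_le j)).trans hk
    · change (tG C j).f ((C j).f ((s (j+1)).1 n')) = x n'
      rw [h5]
      exact (tG C j).eq_le (hp j) hx hn' h3
  have hAB : ∀ j, A j ∨ ∃ n, B j n := by
    intro j
    induction j with
    | zero => exact Or.inl fun n => ⟨by rw [hs0]; rfl, by rw [hs0]⟩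
    | succ j ih =>
      rcases ih with h | ⟨n, h⟩
      · exact hAA j h
      · obtain ⟨n', _, h'⟩ := hBB j n h
        exact Or.inr ⟨n', h'⟩
  by_cases hall : ∀ j, A j
  · left
    intro n
    refine ⟨?_, ?_⟩
    · exact (h0 n n (hK' n)).trans (hall n n).1
    · exact (hst n n (hK' n)).trans (hall n n).2
  · right
    push Not at hall
    obtain ⟨j0, hj0⟩ := hall
    obtain ⟨n0, hn0⟩ := (hAB j0).resolve_left hj0
    have hmore : ∀ j, j0 ≤ j → ∃ n, n ≤ n0 ∧ B j n := by
      intro j hj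
      induction j, hj using Nat.le_induction with
      | base => exact ⟨n0, le_rfl, hn0⟩
      | succ j hj ih =>
        obtain ⟨n, hn, hb⟩ := ih
        obtain ⟨n', hn', hb'⟩ := hBB j n hb
        exact ⟨n', hn'.trans hn, hb'⟩
    obtain ⟨n, hn, h1, h2, h3⟩ := hmore (max j0 n0) (le_max_left _ _)
    have hle : n ≤ K (max j0 n0) := hn.trans ((le_max_right _ _).trans (hK' _))
    exact ⟨n, h1, (hst n _ hle).trans h2, (h0 n _ hle).trans h3⟩

variable (C) in
noncomputable def tcover : Cover (TL hK hK' C) (T 0) (K 0) where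
  toHom := tpr hK hK' C 0
  inj p q hp h := thr_ext hK 0 h hp
  surj p hp := thr_exists 0 T K hK C p hp
  st_eq p hp := tst_eq hK hK' p hp
  φ b σ := tsig hK hK' b σ 0
  loc i σ τ n h p hp := tapp_loc hK hK' i σ τ n h _ 0 p hp
  agree i σ p hp := tsig_thr hK hK' i σ 0 p hp
  lift := tlift hK hK'

end Limit

theorem limit (T : ℕ → GTree.{u}) (K : ℕ → ℕ) (hK : Monotone K) (hK' : ∀ i, i ≤ K i)
    (C : ∀ i, Cover (T (i+1)) (T i) (K i)) :
    ∃ (S : GTree.{u}) (D : Cover S (T 0) (K 0)) (pr : ∀ j, Hom S (T j)),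
      (∀ p, (pr 0).f p = D.f p) ∧ ∀ j p, (C j).f ((pr (j+1)).f p) = (pr j).f p :=
  ⟨TL hK hK' C, tcover hK hK' C, tpr hK hK' C, fun p => rfl, fun j p =>
    Subtype.property (p := fun t : ∀ i, (T i).N => ∀ i, (C i).f (t (i+1)) = t i) p j⟩

end BD



namespace BD

/-- Hereditarily unravelable sets of plays. -/
def Unr (T : GTree.{u}) (A : Set (ℕ → T.N)) : Prop :=
  ∀ (T' : GTree.{u}) (f : Hom T' T) (k : ℕ), ∃ (S : GTree.{u}) (C : Cover S T' k) (n : ℕ)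
    (P : Set S.N), ∀ x, Play S x → (∀ m, S.st (x m) = none) →
      ((fun m => f.f (C.f (x m))) ∈ A ↔ x n ∈ P)

lemma Unr.base {T : GTree.{u}} {A : Set (ℕ → T.N)} (n : ℕ) (P : Set T.N)
    (h : ∀ x, Play T x → (x ∈ A ↔ x n ∈ P)) : Unr T A := fun T' f k =>
  ⟨T', Cover.refl T' k, n, {p | f.f p ∈ P}, fun x hx _ => h _ (f.play hx)⟩

lemma Unr.compl {T : GTree.{u}} {A : Set (ℕ → T.N)} (h : Unr T A) : Unr T Aᶜ := by
  intro T' f k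
  obtain ⟨S, C, n, P, hP⟩ := h T' f k
  exact ⟨S, C, n, Pᶜ, fun x hx hs => not_congr (hP x hx hs)⟩

lemma Unr.iUnion {T : GTree.{u}} {A : ℕ → Set (ℕ → T.N)} (h : ∀ i, Unr T (A i)) :
    Unr T (⋃ i, A i) := by
  intro T' f k
  choose S C n P hP using (fun (i : ℕ) (X : (T' : GTree.{u}) × Hom T' T) => h i X.1 X.2 (k+i))
  let X : ℕ → (T' : GTree.{u}) × Hom T' T := fun i =>
    Nat.rec (motive := fun _ => (T' : GTree.{u}) × Hom T' T) ⟨T', f⟩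
      (fun i X => ⟨S i X, X.2.comp (C i X).toHom⟩) i
  obtain ⟨L, D, pr, hpr0, hpr⟩ := limit (fun i => (X i).1) (fun i => k + i)
    (fun a b h => Nat.add_le_add_left h k) (fun i => Nat.le_add_left i k) (fun i => C i (X i))
  have hproj : ∀ i p, (X i).2.f ((pr i).f p) = f.f (D.f p) := by
    intro i
    induction i with
    | zero => intro p; rw [← hpr0 p]; rfl
    | succ i ih =>
      intro p
      rw [← ih p, ← hpr i p]
      rfl
  let Out : Set L.N := {p | ∃ i, n i (X i) < L.lev p ∧
    (pr (i+1)).f (L.anc p (n i (X i))) ∈ P i (X i)}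
  have hOut : ∀ p, L.par p ∈ Out → p ∈ Out := by
    rintro p ⟨i, h1, h2⟩
    rw [L.lev_par] at h1
    rw [L.anc_par (by omega)] at h2
    exact ⟨i, by omega, h2⟩
  obtain ⟨U, E, N, R, hR⟩ := unravel_open L k Out hOut
  refine ⟨U, Cover.comp (k := k) D E, N, R, ?_⟩
  intro x hx hst
  rw [← hR x hx hst]
  have hy : Play L (fun m => E.f (x m)) := E.toHom.play hx
  have hys : ∀ m, L.st (E.f (x m)) = none := fun m => E.toHom.st_none (hst m)
  have key : ∀ i, (fun m => f.f (D.f (E.f (x m)))) ∈ A i ↔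
      (pr (i+1)).f (E.f (x (n i (X i)))) ∈ P i (X i) := by
    intro i
    have h1 := hP i (X i) (fun m => (pr (i+1)).f (E.f (x m))) ((pr (i+1)).play hy)
      (fun m => (pr (i+1)).st_none (hys m))
    rw [← h1]
    have : (fun m => f.f (D.f (E.f (x m)))) =
        fun m => (X i).2.f ((C i (X i)).f ((pr (i+1)).f (E.f (x m)))) := by
      funext m
      rw [← hproj i, ← hpr i]
    rw [this]
  change (fun m => f.f (D.f (E.f (x m)))) ∈ _ ↔ _
  rw [Set.mem_iUnion]
  constructor
  · rintro ⟨i, hi⟩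
    refine ⟨n i (X i) + 1, i, ?_, ?_⟩
    · rw [(hy _).1]; omega
    · rw [hy.anc (Nat.le_succ _)]
      exact (key i).1 hi
  · rintro ⟨m, i, h1, h2⟩
    rw [(hy _).1] at h1
    rw [hy.anc h1.le] at h2
    exact ⟨i, (key i).2 h2⟩

end BD



namespace BD

section Det
variable {T : GTree.{u}}

/-- player `i` can win (for the target set `D`) from node `p` -/
def WinAt (i : Bool) (D : Set (ℕ → T.N)) (p : T.N) : Prop :=
  ∃ σ : Strat T, ∀ x, Play T x → x (T.lev p) = p →
    (∀ m, T.lev p ≤ m → m.bodd = i → x (m+1) = σ.f (x m)) → x ∈ D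

noncomputable def sel (i : Bool) (D : Set (ℕ → T.N)) (p : T.N) : Strat T :=
  if h : WinAt i D p then h.choose else ⟨T.child, T.lev_child, T.par_child⟩

lemma sel_spec {i : Bool} {D : Set (ℕ → T.N)} {p : T.N} (h : WinAt i D p) :
    ∀ x, Play T x → x (T.lev p) = p →
    (∀ m, T.lev p ≤ m → m.bodd = i → x (m+1) = (sel i D p).f (x m)) → x ∈ D := by
  rw [sel, dif_pos h]; exact h.choose_spec

lemma glue_own {i : Bool} {D : Set (ℕ → T.N)} {p q : T.N} (hp : (T.lev p).bodd = i)
    (hq : T.par q = p) (hl : T.lev q = T.lev p + 1) (h : WinAt i D q) : WinAt i D p := by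
  obtain ⟨σ, hσ⟩ := h
  refine ⟨⟨fun u => if u = p then q else σ.f u, ?_, ?_⟩, ?_⟩
  · intro u
    split_ifs with h
    · rw [h, hl]
    · exact σ.lev_f u
  · intro u
    split_ifs with h
    · rw [h, hq]
    · exact σ.par_f u
  · intro x hx hxp hc
    apply hσ x hx
    · have := hc _ le_rfl hp
      rw [hl, this, hxp]
      exact if_pos rfl
    · intro m hm hb
      rw [hc m (by omega) hb]
      refine if_neg ?_
      intro he
      have := (hx m).1
      rw [he] at this
      omega

lemma glue_opp {i : Bool} {D : Set (ℕ → T.N)} {p : T.N} (hp : (T.lev p).bodd ≠ i)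
    (h : ∀ q, T.par q = p → T.lev q = T.lev p + 1 → WinAt i D q) : WinAt i D p := by
  refine ⟨⟨fun u => (sel i D (T.anc u (T.lev p + 1))).f u, ?_, ?_⟩, ?_⟩
  · intro u; exact Strat.lev_f _ _
  · intro u; exact Strat.par_f _ _
  · intro x hx hxp hc
    have hl := (hx (T.lev p + 1)).1
    have hw := h (x (T.lev p + 1)) (by rw [(hx _).2, hxp]) hl
    apply sel_spec hw x hx (by rw [hl])
    intro m hm hb
    rw [hl] at hm
    rw [hc m (by omega) hb]
    change (sel i D (T.anc (x m) (T.lev p + 1))).f (x m) = _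
    rw [hx.anc hm]

lemma avoid {i j : Bool} (hij : i ≠ j) {D E : Set (ℕ → T.N)} {p : T.N} (hp : ¬ WinAt i D p)
    (h : ∀ x, Play T x → x (T.lev p) = p → (∀ m, T.lev p ≤ m → ¬ WinAt i D (x m)) → x ∈ E) :
    WinAt j E p := by
  have hex : ∀ u : T.N, ∃ q, T.lev q = T.lev u + 1 ∧ T.par q = u ∧
      ((T.lev u).bodd = j → ¬ WinAt i D u → ¬ WinAt i D q) := by
    intro u
    by_cases hu : (T.lev u).bodd = j ∧ ¬ WinAt i D u
    · by_contra hcon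
      push Not at hcon
      apply hu.2
      apply glue_opp
      · rw [hu.1]; exact hij.symm
      · intro q h1 h2
        exact (hcon q h2 h1).2.2
    · exact ⟨T.child u, T.lev_child u, T.par_child u, fun h1 h2 => absurd ⟨h1, h2⟩ hu⟩
  choose f h1 h2 h3 using hex
  refine ⟨⟨f, h1, h2⟩, ?_⟩
  intro x hx hxp hc
  apply h x hx hxp
  intro m hm
  induction m, hm using Nat.le_induction with
  | base => rw [hxp]; exact hp
  | succ m hm ih =>
    have hl := (hx m).1
    by_cases hb : m.bodd = j
    · rw [hc m hm hb]
      exact h3 _ (by rw [hl]; exact hb) ih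
    · intro hw
      apply ih
      refine glue_own ?_ (hx m).2 (by rw [hl, (hx _).1]) hw
      rw [hl]
      revert hb hij
      cases m.bodd <;> cases i <;> cases j <;> simp

/-- player `i`'s winning set -/
def DW (n : ℕ) (P : Set T.N) (i : Bool) : Set (ℕ → T.N) :=
  {x | (∃ m, T.st (x m) = some (!i)) ∨ ((∀ m, T.st (x m) = none) ∧ (x n ∈ P ↔ i = false))}

lemma det_high (n : ℕ) (P : Set T.N) (p : T.N) (hp : n ≤ T.lev p) (j : Bool)
    (hj : T.anc p n ∈ P ↔ j = false) : WinAt (!j) (DW n P (!j)) p ∨ WinAt j (DW n P j) p := by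
  by_cases h : WinAt (!j) (DW n P (!j)) p
  · exact Or.inl h
  · refine Or.inr (avoid (by simp) h ?_)
    intro x hx hxp hw
    have h1 : ∀ m, T.st (x m) ≠ some j := by
      intro m hm
      refine hw (max m (T.lev p)) (le_max_right _ _) ⟨⟨T.child, T.lev_child, T.par_child⟩, ?_⟩
      intro y hy hyp _
      left
      refine ⟨T.lev (x (max m (T.lev p))), ?_⟩
      · rw [hyp, Bool.not_not]
        exact hx.st_mono (le_max_left _ _) hm
    by_cases h2 : ∃ m, T.st (x m) = some (!j)
    · exact Or.inl h2
    · right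
      push Not at h2
      refine ⟨?_, ?_⟩
      · intro m
        have a := h1 m
        have b := h2 m
        revert a b
        cases T.st (x m) with
        | none => simp
        | some c => cases c <;> cases j <;> simp
      · rw [← hx.anc hp, hxp]; exact hj

lemma det_all (n : ℕ) (P : Set T.N) (d : ℕ) : ∀ p : T.N, n ≤ T.lev p + d →
    ∃ i, WinAt i (DW n P i) p := by
  induction d with
  | zero =>
    intro p hp
    by_cases h : T.anc p n ∈ P
    · rcases det_high n P p hp false (by simp [h]) with h | h
      · exact ⟨_, h⟩
      · exact ⟨_, h⟩
    · rcases det_high n P p hp true (by simp [h]) with h | h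
      · exact ⟨_, h⟩
      · exact ⟨_, h⟩
  | succ d ih =>
    intro p hp
    by_cases h : ∃ q, T.par q = p ∧ T.lev q = T.lev p + 1 ∧
        WinAt (T.lev p).bodd (DW n P (T.lev p).bodd) q
    · obtain ⟨q, h1, h2, h3⟩ := h
      exact ⟨_, glue_own rfl h1 h2 h3⟩
    · refine ⟨!(T.lev p).bodd, glue_opp (by simp) ?_⟩
      intro q h1 h2
      obtain ⟨i, hi⟩ := ih q (by omega)
      have hne : i ≠ (T.lev p).bodd := by
        rintro rfl
        exact h ⟨q, h1, h2, hi⟩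
      have : i = !(T.lev p).bodd := by
        revert hne
        cases i <;> cases (T.lev p).bodd <;> simp
      rw [← this]; exact hi

end Det

theorem borel_det (T : GTree.{u}) (hst : ∀ p, T.st p = none)
    (hroot : ∀ p q, T.lev p = 0 → T.lev q = 0 → p = q) (r : T.N) (hr : T.lev r = 0)
    (A : Set (ℕ → T.N)) (hA : Unr T A) :
    (∃ σ, ∀ x, Play T x → Cons T false σ x → x ∈ A) ∨
    (∃ σ, ∀ x, Play T x → Cons T true σ x → x ∉ A) := by
  obtain ⟨S, C, n, P, hP⟩ := hA T (Hom.id T) 0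
  obtain ⟨r', hr'⟩ := C.surj r hr.le
  have hl : S.lev r' = 0 := by rw [← C.lev_f, hr', hr]
  obtain ⟨i, σ, hσ⟩ := det_all n P n r' (by omega)
  have key : ∀ x, Play T x → Cons T i (C.φ i σ) x → (x ∈ A ↔ i = false) := by
    intro x hx hc
    obtain ⟨y, hy, hyc, hyl⟩ := C.lift i σ x hx hc
    have hy0 : y 0 = r' := by
      apply C.inj
      · rw [(hy 0).1]
      · apply hroot
        · rw [C.lev_f, (hy 0).1]
        · rw [hr', hr]
    have hD := hσ y hy (by rw [hl, hy0]) (fun m _ hb => hyc m hb)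
    rcases hyl with h | ⟨m, _, h1, _⟩
    · have hs : ∀ m, S.st (y m) = none := fun m => by rw [(h m).2, hst]
      rcases hD with ⟨m, hm⟩ | ⟨_, hD⟩
      · rw [hs] at hm; cases hm
      · rw [← hD, ← hP y hy hs]
        have : (fun m => (Hom.id T).f (C.f (y m))) = x := by
          funext m
          exact (h m).1
        rw [this]
    · exfalso
      rcases hD with ⟨m', hm'⟩ | ⟨hD, _⟩
      · have a := hy.st_mono (le_max_left m m') h1
        have b := hy.st_mono (le_max_right m m') hm'
        rw [a] at b
        simp at b
      · rw [hD] at h1; cases h1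
  cases i with
  | false => exact Or.inl ⟨_, fun x hx hc => (key x hx hc).2 rfl⟩
  | true => exact Or.inr ⟨_, fun x hx hc h => by simpa using (key x hx hc).1 h⟩

end BD



namespace BD

section Color
variable {Q K Act : Type u}

lemma colorHist_eq_iff (col : Q → Q → K) (h π : ℕ → Q) (n : ℕ) :
    colorHist col h n = colorHist col π n ↔
      ∀ m, m < n → col (h m) (h (m+1)) = col (π m) (π (m+1)) := by
  unfold colorHist
  rw [List.ofFn_inj]
  constructor
  · intro e m hm
    exact congrFun e ⟨m, hm⟩
  · intro e
    funext i
    exact e i i.2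

lemma colorHist_length (col : Q → Q → K) (h : ℕ → Q) (n : ℕ) :
    (colorHist col h n).length = n := by
  simp [colorHist]

/-- finite consistency -/
def FC (q0 : Q) (Post : Q → Act → Set Q) (s : ℕ → (ℕ → Q) → Act) (n : ℕ) (h : ℕ → Q) : Prop :=
  h 0 = q0 ∧ ∀ m, m < n → h (m+1) ∈ Post (h m) (s m h)

def HS (q0 : Q) (Post : Q → Act → Set Q) (col : Q → Q → K) (s : ℕ → (ℕ → Q) → Act)
    (c : List K) (q : Q) : Set (ℕ → Q) :=
  {h | FC q0 Post s c.length h ∧ colorHist col h c.length = c ∧ h c.length = q}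

/-- lexicographic comparison of histories up to `n` -/
def LexN (n : ℕ) (h h' : ℕ → Q) : Prop :=
  ∃ i, i ≤ n ∧ (∀ j, j < i → h j = h' j) ∧ WellOrderingRel (h i) (h' i)

lemma lexN_wf (n : ℕ) : WellFounded (LexN (Q := Q) n) := by
  have h1 : WellFounded (Pi.Lex (fun a b : Fin (n+1) => a < b)
      (fun {i : Fin (n+1)} => (WellOrderingRel : Q → Q → Prop))) :=
    Pi.Lex.wellFounded _ (fun i => WellOrderingRel.isWellOrder.wf)
  have h2 := InvImage.wf (fun (h : ℕ → Q) (i : Fin (n+1)) => h i) h1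
  refine Subrelation.wf ?_ h2
  rintro h h' ⟨i, hi, hj, hr⟩
  exact ⟨⟨i, by omega⟩, fun j hji => hj j hji, hr⟩

lemma hs_min {q0 : Q} {Post : Q → Act → Set Q} {col : Q → Q → K} {s : ℕ → (ℕ → Q) → Act}
    {c : List K} {q : Q} (hne : (HS q0 Post col s c q).Nonempty) :
    ∃ h ∈ HS q0 Post col s c q, ∀ h' ∈ HS q0 Post col s c q, ¬ LexN c.length h' h :=
  (lexN_wf c.length).has_min _ hne

theorem colorize [Nonempty Act] (q0 : Q) (Post : Q → Act → Set Q) (col : Q → Q → K)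
    (s : ℕ → (ℕ → Q) → Act) (hs : ∀ n h h', (∀ m, m ≤ n → h m = h' m) → s n h = s n h')
    (D : Set (ℕ → K))
    (hwin : ∀ π : ℕ → Q, π 0 = q0 → (∀ n, π (n+1) ∈ Post (π n) (s n π)) → colorSeq col π ∈ D) :
    ∃ s' : List K → Q → Act, ∀ π : ℕ → Q, π 0 = q0 →
      (∀ n, π (n+1) ∈ Post (π n) (s' (colorHist col π n) (π n))) → colorSeq col π ∈ D := by
  let s' : List K → Q → Act := fun c q =>
    if h : (HS q0 Post col s c q).Nonempty then s c.length (hs_min h).choose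
    else Classical.arbitrary Act
  refine ⟨s', ?_⟩
  intro π hπ0 hπ
  have hnx : ∀ n (h : ℕ → Q), h ∈ HS q0 Post col s (colorHist col π n) (π n) →
      s' (colorHist col π n) (π n) = s n h →
      Function.update h (n+1) (π (n+1)) ∈ HS q0 Post col s (colorHist col π (n+1)) (π (n+1)) := by
    rintro n h ⟨⟨h1, h2⟩, h3, h4⟩ h5
    rw [colorHist_length] at h2 h3 h4
    rw [colorHist_eq_iff] at h3
    have hu : ∀ m, m ≤ n → Function.update h (n+1) (π (n+1)) m = h m := fun m hm =>
      Function.update_of_ne (by omega) _ _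
    have hu1 : Function.update h (n+1) (π (n+1)) (n+1) = π (n+1) := Function.update_self _ _ _
    refine ⟨⟨?_, ?_⟩, ?_, ?_⟩
    · rw [hu 0 (Nat.zero_le _), h1]
    · intro m hm
      rw [colorHist_length] at hm
      rw [hu m (by omega), hs m _ h (fun j hj => hu j (by omega))]
      rcases Nat.lt_or_ge m n with hmn | hmn
      · rw [hu (m+1) (by omega)]; exact h2 m hmn
      · have : m = n := by omega
        subst this
        rw [hu1, ← h5, h4]; exact hπ m
    · rw [colorHist_length, colorHist_eq_iff]
      intro m hm
      rw [hu m (by omega)]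
      rcases Nat.lt_or_ge m n with hmn | hmn
      · rw [hu (m+1) (by omega)]; exact h3 m hmn
      · have : m = n := by omega
        subst this
        rw [hu1, h4]
    · rw [colorHist_length, hu1]
  have hs' : ∀ n (hne : (HS q0 Post col s (colorHist col π n) (π n)).Nonempty),
      s' (colorHist col π n) (π n) = s n (hs_min hne).choose := by
    intro n hne
    change dite _ _ _ = _
    rw [dif_pos hne]
    exact congrArg (fun k => s k (hs_min hne).choose) (colorHist_length col π n)
  have hne : ∀ n, (HS q0 Post col s (colorHist col π n) (π n)).Nonempty := by
    intro n
    induction n with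
    | zero => exact ⟨fun _ => q0, ⟨rfl, fun m hm => by simp [colorHist] at hm⟩, rfl, hπ0.symm⟩
    | succ n ih => exact ⟨_, hnx n _ (hs_min ih).choose_spec.1 (hs' n ih)⟩
  let H : ℕ → ℕ → Q := fun n => (hs_min (hne n)).choose
  have hH : ∀ n, H n ∈ HS q0 Post col s (colorHist col π n) (π n) := fun n =>
    (hs_min (hne n)).choose_spec.1
  have hHm : ∀ n i, i ≤ n → (∀ j, j < i → H n j = H (n+1) j) →
      ¬ WellOrderingRel (H n i) (H (n+1) i) := by
    intro n i hi hj hr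
    have h1 := (hs_min (hne (n+1))).choose_spec.2 _ (hnx n (H n) (hH n) (hs' n (hne n)))
    apply h1
    have hu : ∀ m, m ≤ n → Function.update (H n) (n+1) (π (n+1)) m = H n m := fun m hm =>
      Function.update_of_ne (by omega) _ _
    refine ⟨i, ?_, ?_, ?_⟩
    · rw [colorHist_length]; omega
    · intro j hji
      rw [hu j (by omega)]; exact hj j hji
    · rw [hu i hi]; exact hr
  clear_value H
  have hE : ∀ i, ∃ N, ∀ n, N ≤ n → ∀ j, j < i → H n j = H N j := by
    intro i
    induction i with
    | zero => exact ⟨0, fun n _ j hj => absurd hj (Nat.not_lt_zero j)⟩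
    | succ i ih =>
      obtain ⟨N, hN⟩ := ih
      have hset : (Set.range (fun n => H (max (max N i) n) i)).Nonempty := ⟨_, 0, rfl⟩
      obtain ⟨_, ⟨n0, rfl⟩, hmin⟩ :=
        (WellOrderingRel.isWellOrder (α := Q)).wf.has_min _ hset
      set M := max (max N i) n0 with hM
      have hMN : N ≤ M := (le_max_left _ _).trans (le_max_left _ _)
      have hMi : i ≤ M := (le_max_right _ _).trans (le_max_left _ _)
      have hc : ∀ n, M ≤ n → H n i = H M i := by
        intro n hn
        induction n, hn using Nat.le_induction with
        | base => rfl
        | succ n hn ih' =>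
          have a := hHm n i (by omega) (fun j hj => by
            rw [hN n (by omega) j hj, hN (n+1) (by omega) j hj])
          rw [ih'] at a
          have b := hmin (H (n+1) i) ⟨n+1, by
            change H (max (max N i) (n+1)) i = _
            rw [max_eq_right (by omega)]⟩
          rcases trichotomous_of WellOrderingRel (H (n+1) i) (H M i) with h | h | h
          · exact absurd h b
          · exact h
          · exact absurd h a
      refine ⟨M, ?_⟩
      intro n hn j hj
      rcases Nat.lt_or_ge j i with h | h
      · rw [hN n (by omega) j h, hN M hMN j h]
      · have : j = i := by omega
        subst this
        exact hc n hn
  choose N hN using hE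
  let L : ℕ → Q := fun i => H (N (i+1)) i
  have hL : ∀ i n, N i ≤ n → ∀ j, j < i → H n j = L j := by
    intro i n hn j hj
    have a := hN i (max (N i) (N (j+1))) (le_max_left _ _) j hj
    have b := hN (j+1) (max (N i) (N (j+1))) (le_max_right _ _) j (Nat.lt_succ_self j)
    rw [hN i n hn j hj, ← a, b]
  have hcol : colorSeq col L = colorSeq col π := by
    funext m
    obtain ⟨_, h3, _⟩ := hH (max (N (m+2)) (m+1))
    rw [colorHist_length, colorHist_eq_iff] at h3
    have := h3 m (lt_of_lt_of_le (Nat.lt_succ_self m) (le_max_right _ _))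
    rw [hL (m+2) _ (le_max_left _ _) m (by omega),
      hL (m+2) _ (le_max_left _ _) (m+1) (by omega)] at this
    exact this
  rw [← hcol]
  apply hwin
  · rw [← hL 1 (N 1) le_rfl 0 (by omega)]
    exact (hH _).1.1
  · intro m
    have h2 := (hH (max (N (m+2)) (m+1))).1.2 m (by
      rw [colorHist_length]; exact lt_of_lt_of_le (Nat.lt_succ_self m) (le_max_right _ _))
    rw [hs m _ L (fun j hj => hL (m+2) _ (le_max_left _ _) j (by omega)),
      hL (m+2) _ (le_max_left _ _) m (by omega),
      hL (m+2) _ (le_max_left _ _) (m+1) (by omega)] at h2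
    exact h2

end Color

end BD



namespace BD

section Reduction
variable {SA SB Q K : Type u} [Nonempty SA] [Nonempty SB]

/-- the base tree: sequences of moves, most recent first -/
noncomputable def BT (SA SB : Type u) [Nonempty SA] [Nonempty SB] : GTree.{u} where
  N := List (SA × SB)
  lev := List.length
  par := List.tail
  child l := (Classical.arbitrary SA, Classical.arbitrary SB) :: l
  st _ := none
  lev_par p := List.length_tail
  lev_child p := rfl
  par_child p := rfl
  st_mono p i h := h

def stt (q0 : Q) (δ : Q → SA → SB → Q) : List (SA × SB) → Q
  | [] => q0
  | [_] => q0
  | b :: a :: l => δ (stt q0 δ l) a.1 b.2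

/-- the sequence of states of a play in the base tree -/
def sts (q0 : Q) (δ : Q → SA → SB → Q) (x : ℕ → List (SA × SB)) : ℕ → Q :=
  fun n => stt q0 δ (x (2*n))

lemma unr_base (q0 : Q) (δ : Q → SA → SB → Q) (col : Q → Q → K) (W : Set (ℕ → K))
    (hW : MeasurableSet[BorelSeq K] W) :
    Unr (BT SA SB) {x : ℕ → List (SA × SB) | colorSeq col (sts q0 δ x) ∈ W} := by
  unfold BorelSeq at hW
  induction W, hW using MeasurableSpace.generateFrom_induction with
  | hC t ht _ =>
    obtain ⟨w, rfl⟩ := ht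
    refine Unr.base (2 * w.length) {p | ∀ i : ℕ, ∀ h : i < w.length,
      col (stt q0 δ ((BT SA SB).anc p (2*i))) (stt q0 δ ((BT SA SB).anc p (2*(i+1)))) =
        w.get ⟨i, h⟩} ?_
    intro x hx
    refine forall_congr' fun i => forall_congr' fun hi => ?_
    have e1 := hx.anc (m := 2*i) (n := 2 * w.length) (by omega)
    have e2 := hx.anc (m := 2*(i+1)) (n := 2 * w.length) (by omega)
    rw [e1, e2]
    rfl
  | empty => exact Unr.base 0 ∅ (fun x _ => Iff.rfl)
  | compl t _ ih => exact Unr.compl ih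
  | iUnion f _ ih =>
    have := Unr.iUnion ih
    convert this using 1
    ext x
    simp only [Set.mem_iUnion]
    exact ⟨fun h => h, fun h => h⟩

variable (σ : Strat (BT SA SB))

def sf (l : List (SA × SB)) : List (SA × SB) := σ.f l

lemma sf_len (l : List (SA × SB)) : (sf σ l).length = l.length + 1 := σ.lev_f l
lemma sf_tail (l : List (SA × SB)) : (sf σ l).tail = l := σ.par_f l

lemma sf_ex (l : List (SA × SB)) : ∃ e, sf σ l = e :: l := by
  have h1 := sf_len σ l
  have h2 := sf_tail σ l
  cases h : sf σ l with
  | nil => rw [h] at h1; simp at h1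
  | cons e l' => rw [h] at h2; exact ⟨e, by rw [← h2]; rfl⟩

noncomputable def hd (l : List (SA × SB)) : SA × SB := (sf_ex σ l).choose
lemma hd_spec (l : List (SA × SB)) : sf σ l = hd σ l :: l := (sf_ex σ l).choose_spec

/-- interleaving -/
def itl (nd md : ℕ → List (SA × SB)) (n : ℕ) : List (SA × SB) :=
  if n.bodd then md n.div2 else nd n.div2

lemma itl_even (nd md : ℕ → List (SA × SB)) (n : ℕ) : itl nd md (2*n) = nd n := by
  simp [itl, Nat.div2_val]

lemma itl_odd (nd md : ℕ → List (SA × SB)) (n : ℕ) : itl nd md (2*n+1) = md n := by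
  have : (2 * n + 1) / 2 = n := by omega
  simp [itl, Nat.div2_val, this]

lemma itl_play {nd md : ℕ → List (SA × SB)} (h0 : nd 0 = []) (h1 : ∀ n, ∃ e, md n = e :: nd n)
    (h2 : ∀ n, ∃ e, nd (n+1) = e :: md n) : Play (BT SA SB) (itl nd md) := by
  have hl : ∀ n, (nd n).length = 2 * n := by
    intro n
    induction n with
    | zero => rw [h0]; rfl
    | succ n ih =>
      obtain ⟨e, he⟩ := h1 n
      obtain ⟨e', he'⟩ := h2 n
      rw [he', he]; simp [ih]; omega
  intro n
  obtain ⟨m, rfl | rfl⟩ := Nat.even_or_odd' n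
  · obtain ⟨e, he⟩ := h1 m
    refine ⟨?_, ?_⟩
    · rw [itl_even]; exact hl m
    · rw [itl_even, itl_odd, he]; rfl
  · obtain ⟨e, he⟩ := h1 m
    obtain ⟨e', he'⟩ := h2 m
    refine ⟨?_, ?_⟩
    · rw [itl_odd, he]
      change (nd m).length + 1 = _
      rw [hl]
    · rw [show 2 * m + 1 + 1 = 2 * (m+1) by omega, itl_even, itl_odd, he']; rfl

section PlayerA
variable (q0 : Q) (δ : Q → SA → SB → Q)

noncomputable def pickb (l : List (SA × SB)) (q : Q) : SB :=
  if h : ∃ b, q = δ (stt q0 δ l) (hd σ l).1 b then h.choose else Classical.arbitrary SB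

noncomputable def ndA (h : ℕ → Q) : ℕ → List (SA × SB)
  | 0 => []
  | n+1 => (Classical.arbitrary SA, pickb σ q0 δ (ndA h n) (h (n+1))) :: sf σ (ndA h n)

lemma ndA_congr (h h' : ℕ → Q) (n : ℕ) (hh : ∀ m, m ≤ n → h m = h' m) :
    ndA σ q0 δ h n = ndA σ q0 δ h' n := by
  induction n with
  | zero => rfl
  | succ n ih =>
    rw [ndA, ndA, ih (fun m hm => hh m (by omega)), hh (n+1) le_rfl]

lemma redA (col : Q → Q → K) (W : Set (ℕ → K))
    (hσ : ∀ x, Play (BT SA SB) x → Cons (BT SA SB) false σ x → colorSeq col (sts q0 δ x) ∈ W) :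
    ∃ sA : List K → Q → SA, WinA q0 δ col W sA := by
  have hwin : ∀ π : ℕ → Q, π 0 = q0 → (∀ n, ∃ b, π (n+1) = δ (π n) (hd σ (ndA σ q0 δ π n)).1 b) →
      colorSeq col π ∈ W := by
    intro π h0 hp
    have hst : ∀ n, stt q0 δ (ndA σ q0 δ π n) = π n := by
      intro n
      induction n with
      | zero => exact h0.symm
      | succ n ih =>
        have hex : ∃ b, π (n+1) = δ (stt q0 δ (ndA σ q0 δ π n)) (hd σ (ndA σ q0 δ π n)).1 b := by
          rw [ih]; exact hp n
        rw [ndA, hd_spec, stt, pickb, dif_pos hex]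
        exact hex.choose_spec.symm
    have hpl : Play (BT SA SB) (itl (ndA σ q0 δ π) (fun n => sf σ (ndA σ q0 δ π n))) :=
      itl_play rfl (fun n => ⟨_, hd_spec σ _⟩) (fun n => ⟨_, rfl⟩)
    have := hσ _ hpl ?_
    · have e : sts q0 δ (itl (ndA σ q0 δ π) (fun n => sf σ (ndA σ q0 δ π n))) = π := by
        funext n
        rw [sts, itl_even, hst]
      rwa [e] at this
    · intro n hn
      obtain ⟨m, rfl | rfl⟩ := Nat.even_or_odd' n
      · rw [itl_even, itl_odd]; rfl
      · simp at hn
  obtain ⟨s', hs'⟩ := colorize q0 (fun q a => {q' | ∃ b, q' = δ q a b}) col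
    (fun n h => (hd σ (ndA σ q0 δ h n)).1)
    (fun n h h' hh => by rw [ndA_congr σ q0 δ h h' n hh]) W hwin
  exact ⟨s', fun π hπ => hs' π hπ.1 hπ.2⟩

end PlayerA

section PlayerB
variable (q0 : Q) (δ : Q → SA → SB → Q)

/-- the node after a move of player A -/
noncomputable def mv (l : List (SA × SB)) (a : SA) : List (SA × SB) :=
  (a, Classical.arbitrary SB) :: l

noncomputable def picka (l : List (SA × SB)) (q : Q) : SA :=
  if h : ∃ a, q = δ (stt q0 δ l) a (hd σ (mv l a)).2 then h.choose else Classical.arbitrary SA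

noncomputable def ndB (h : ℕ → Q) : ℕ → List (SA × SB)
  | 0 => []
  | n+1 => sf σ (mv (ndB h n) (picka σ q0 δ (ndB h n) (h (n+1))))

lemma ndB_congr (h h' : ℕ → Q) (n : ℕ) (hh : ∀ m, m ≤ n → h m = h' m) :
    ndB σ q0 δ h n = ndB σ q0 δ h' n := by
  induction n with
  | zero => rfl
  | succ n ih =>
    rw [ndB, ndB, ih (fun m hm => hh m (by omega)), hh (n+1) le_rfl]

lemma redB {O : Type u} (ρ : SA → SB → O) (hρ : GFDetermined ρ) (hb : BuiltOn ρ δ)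
    (col : Q → Q → K) (W : Set (ℕ → K))
    (hσ : ∀ x, Play (BT SA SB) x → Cons (BT SA SB) true σ x → colorSeq col (sts q0 δ x) ∉ W) :
    ∃ sB : List K → Q → SB, WinB q0 δ col W sB := by
  have hbs : ∀ l : List (SA × SB), ∃ b, ∀ a, ∃ a', δ (stt q0 δ l) a b =
      δ (stt q0 δ l) a' (hd σ (mv l a')).2 := by
    intro l
    obtain ⟨h, hh⟩ := hb (stt q0 δ l)
    rcases hρ {o | ¬ ∃ a', h o = δ (stt q0 δ l) a' (hd σ (mv l a')).2} with ⟨a, ha⟩ | ⟨b, hb⟩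
    · exact absurd ⟨a, (hh _ _).symm⟩ (ha (hd σ (mv l a)).2)
    · refine ⟨b, fun a => ?_⟩
      rw [hh a b]
      exact not_not.mp (hb a)
  choose bs hbs using hbs
  have hwin : ∀ π : ℕ → Q, π 0 = q0 → (∀ n, ∃ a, π (n+1) = δ (π n) a (bs (ndB σ q0 δ π n))) →
      colorSeq col π ∈ Wᶜ := by
    intro π h0 hp
    have hst : ∀ n, stt q0 δ (ndB σ q0 δ π n) = π n := by
      intro n
      induction n with
      | zero => exact h0.symm
      | succ n ih =>
        have hex : ∃ a, π (n+1) = δ (stt q0 δ (ndB σ q0 δ π n)) a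
            (hd σ (mv (ndB σ q0 δ π n) a)).2 := by
          obtain ⟨a, ha⟩ := hp n
          rw [← ih] at ha
          rw [ha]
          exact hbs _ a
        rw [ndB, hd_spec, mv, stt]
        have : picka σ q0 δ (ndB σ q0 δ π n) (π (n+1)) = hex.choose := by
          rw [picka, dif_pos hex]
        rw [this]
        exact hex.choose_spec.symm
    have hpl : Play (BT SA SB) (itl (ndB σ q0 δ π)
        (fun n => mv (ndB σ q0 δ π n) (picka σ q0 δ (ndB σ q0 δ π n) (π (n+1))))) :=
      itl_play rfl (fun n => ⟨_, rfl⟩) (fun n => ⟨_, hd_spec σ _⟩)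
    have := hσ _ hpl ?_
    · have e : sts q0 δ (itl (ndB σ q0 δ π)
        (fun n => mv (ndB σ q0 δ π n) (picka σ q0 δ (ndB σ q0 δ π n) (π (n+1))))) = π := by
        funext n
        rw [sts, itl_even, hst]
      rwa [e] at this
    · intro n hn
      obtain ⟨m, rfl | rfl⟩ := Nat.even_or_odd' n
      · simp at hn
      · rw [show 2 * m + 1 + 1 = 2 * (m+1) by omega, itl_even, itl_odd]; rfl
  obtain ⟨s', hs'⟩ := colorize q0 (fun q b => {q' | ∃ a, q' = δ q a b}) col
    (fun n h => bs (ndB σ q0 δ h n))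
    (fun n h h' hh => by rw [ndB_congr σ q0 δ h h' n hh]) Wᶜ hwin
  exact ⟨s', fun π hπ => hs' π hπ.1 hπ.2⟩

end PlayerB

theorem game_det {O : Type u} (ρ : SA → SB → O) (hρ : GFDetermined ρ) (q0 : Q)
    (δ : Q → SA → SB → Q) (hb : BuiltOn ρ δ) (col : Q → Q → K) (W : Set (ℕ → K))
    (hW : MeasurableSet[BorelSeq K] W) :
    (∃ sA : List K → Q → SA, WinA q0 δ col W sA) ∨
      (∃ sB : List K → Q → SB, WinB q0 δ col W sB) := by
  rcases borel_det (BT SA SB) (fun _ => rfl)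
    (fun p q hp hq => (List.length_eq_zero_iff.mp hp).trans (List.length_eq_zero_iff.mp hq).symm)
    ([] : List (SA × SB)) rfl _ (unr_base q0 δ col W hW) with ⟨σ, h⟩ | ⟨σ, h⟩
  · exact Or.inl (redA σ q0 δ col W h)
  · exact Or.inr (redB σ q0 δ ρ hρ hb col W h)

end Reduction

theorem gf_det_of {SA SB O K : Type u} (ρ : SA → SB → O) (W : Set (ℕ → K))
    (h1 : W.Nonempty) (h2 : Wᶜ.Nonempty)
    (h : ∀ (Q : Type u) (_ : Nonempty Q) (q0 : Q) (δ : Q → SA → SB → Q)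
          (col : Q → Q → K), BuiltOn ρ δ →
          ((∃ sA : List K → Q → SA, WinA q0 δ col W sA) ∨
           (∃ sB : List K → Q → SB, WinB q0 δ col W sB))) : GFDetermined ρ := by
  intro V
  obtain ⟨w, hw⟩ := h1
  obtain ⟨w', hw'⟩ := h2
  let δ : ULift.{u} (ℕ × Bool) → SA → SB → ULift.{u} (ℕ × Bool) := fun q a b =>
    if q.down.1 = 0 then ⟨(1, decide (ρ a b ∈ V))⟩ else ⟨(q.down.1 + 1, q.down.2)⟩
  let col : ULift.{u} (ℕ × Bool) → ULift.{u} (ℕ × Bool) → K := fun s t =>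
    if t.down.2 then w s.down.1 else w' s.down.1
  let pl : Bool → ℕ → ULift.{u} (ℕ × Bool) := fun β n =>
    if n = 0 then ⟨(0, false)⟩ else ⟨(n, β)⟩
  have hcol : ∀ β, colorSeq col (pl β) = if β then w else w' := by
    intro β
    funext n
    cases n <;> cases β <;> simp [colorSeq, col, pl]
  have hbuilt : BuiltOn ρ δ := by
    rintro ⟨n, β⟩
    by_cases hn : n = 0
    · exact ⟨fun o => ⟨(1, decide (o ∈ V))⟩, fun a b => by simp [δ, hn]⟩
    · exact ⟨fun o => ⟨(n + 1, β)⟩, fun a b => by simp [δ, hn]⟩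
  rcases h (ULift.{u} (ℕ × Bool)) ⟨⟨(0, false)⟩⟩ ⟨(0, false)⟩ δ col hbuilt with ⟨s, hs⟩ | ⟨s, hs⟩
  · left
    refine ⟨s [] ⟨(0, false)⟩, ?_⟩
    intro b
    by_contra hb
    apply hw'
    have := hs (pl false) ⟨rfl, ?_⟩
    · rw [hcol] at this; exact this
    · intro n
      refine ⟨b, ?_⟩
      cases n with
      | zero => simp [pl, δ, colorHist, hb]
      | succ n => simp [pl, δ]
  · right
    refine ⟨s [] ⟨(0, false)⟩, ?_⟩
    intro a ha
    have := hs (pl true) ⟨rfl, ?_⟩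
    · rw [hcol] at this; exact this hw
    · intro n
      refine ⟨a, ?_⟩
      cases n with
      | zero => simp [pl, δ, colorHist, ha]
      | succ n => simp [pl, δ]

end BD


/-- For a game form `F = ⟨S_A, S_B, O, ρ⟩` and a set of colors `K` with at least two
elements, the following are equivalent: (1) `F` is determined; (2) for every Borel
`W ⊆ K^ω`, every game on an arena built on `F` is determined; (3) there exists a
non-trivial Borel `W` such that every game on an arena built on `F` is determined. -/
theorem stmt3 {SA SB O K : Type u} [Nonempty SA] [Nonempty SB] [Nonempty O]
    [Nonempty K] (hK : ∃ k k' : K, k ≠ k') (ρ : SA → SB → O) :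
    (GFDetermined ρ ↔
      (∀ W : Set (ℕ → K), MeasurableSet[BorelSeq K] W →
        ∀ (Q : Type u) (_ : Nonempty Q) (q0 : Q) (δ : Q → SA → SB → Q)
          (col : Q → Q → K), BuiltOn ρ δ →
          ((∃ sA : List K → Q → SA, WinA q0 δ col W sA) ∨
           (∃ sB : List K → Q → SB, WinB q0 δ col W sB)))) ∧
    (GFDetermined ρ ↔
      (∃ W : Set (ℕ → K), MeasurableSet[BorelSeq K] W ∧ W.Nonempty ∧ Wᶜ.Nonempty ∧
        ∀ (Q : Type u) (_ : Nonempty Q) (q0 : Q) (δ : Q → SA → SB → Q)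
          (col : Q → Q → K), BuiltOn ρ δ →
          ((∃ sA : List K → Q → SA, WinA q0 δ col W sA) ∨
           (∃ sB : List K → Q → SB, WinB q0 δ col W sB)))) := by
  have h12 : GFDetermined ρ → ∀ W : Set (ℕ → K), MeasurableSet[BorelSeq K] W →
        ∀ (Q : Type u) (_ : Nonempty Q) (q0 : Q) (δ : Q → SA → SB → Q)
          (col : Q → Q → K), BuiltOn ρ δ →
          ((∃ sA : List K → Q → SA, WinA q0 δ col W sA) ∨
           (∃ sB : List K → Q → SB, WinB q0 δ col W sB)) :=
    fun hρ W hW Q _ q0 δ col hb => BD.game_det ρ hρ q0 δ hb col W hW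
  obtain ⟨k, k', hk⟩ := hK
  have hm : MeasurableSet[BorelSeq K] (Cyl [k]) :=
    MeasurableSpace.measurableSet_generateFrom ⟨[k], rfl⟩
  have hn : (Cyl [k]).Nonempty := by
    refine ⟨fun _ => k, ?_⟩
    intro i hi
    have : i = 0 := by simpa using hi
    subst this
    rfl
  have hc : (Cyl [k])ᶜ.Nonempty := by
    refine ⟨fun _ => k', ?_⟩
    intro h
    exact hk (h 0 (by simp)).symm
  refine ⟨⟨h12, fun h => ?_⟩, ⟨fun h => ?_, ?_⟩⟩
  · exact BD.gf_det_of ρ (Cyl [k]) hn hc (h (Cyl [k]) hm)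
  · exact ⟨Cyl [k], hm, hn, hc, h12 h (Cyl [k]) hm⟩
  · rintro ⟨W, _, h1, h2, h⟩
    exact BD.gf_det_of ρ W h1 h2 h
end

section
/- Let K be a non-empty set, W ⊆ K^ω, and M = ⟨M, m_init, μ⟩ a memory skeleton on K. Then W is M-monotone and M-selective if and only if Seq(W) is Seq(M)-monotone and Seq(M)-selective (as an objective over the alphabet Option K). -/
universe u

/-- The length-`n` prefix of an infinite sequence, as a finite word. -/
def prefixWord {D : Type u} (ρ : ℕ → D) (n : ℕ) : List D :=
  List.ofFn (fun i : Fin n => ρ i)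

/-- A finite word is a prefix of an infinite sequence. -/
def IsPrefixOfSeq {K : Type u} (w : List K) (ρ : ℕ → K) : Prop :=
  ∀ i : ℕ, ∀ h : i < w.length, w.get ⟨i, h⟩ = ρ i

/-- `ρ ∈ K^ω` is the projection of `ρ' ∈ (Option K)^ω`: every erased prefix of `ρ'`
is a prefix of `ρ` and the lengths of the erased prefixes tend to infinity
(equivalently, `ρ'` has infinitely many `some` entries whose values, in order,
form `ρ`). -/
def IsProjOf {K : Type u} (ρ : ℕ → K) (ρ' : ℕ → Option K) : Prop :=
  (∀ n : ℕ, IsPrefixOfSeq ((prefixWord ρ' n).reduceOption) ρ) ∧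
  Filter.Tendsto (fun n => ((prefixWord ρ' n).reduceOption).length)
    Filter.atTop Filter.atTop

/-- The sequential version `Seq(W)` of an objective `W ⊆ K^ω`: the sequences in
`(Option K)^ω` with infinitely many `some` entries whose subsequence of values
lies in `W`. -/
def SeqObj {K : Type u} (W : Set (ℕ → K)) : Set (ℕ → Option K) :=
  {ρ' | ∃ ρ ∈ W, IsProjOf ρ ρ'}

/-- `L` is a regular language over `K`: it uses only finitely many letters and it is
accepted by a deterministic finite automaton with finitely many states. -/
def RegularLang {K : Type u} (L : Set (List K)) : Prop :=
  ∃ Sig : Finset K, (∀ w ∈ L, ∀ a ∈ w, a ∈ Sig) ∧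
    ∃ (σ : Type u) (_ : Fintype σ) (M : DFA K σ), ∀ w : List K, w ∈ M.accepts ↔ w ∈ L

/-- `[L]`: the infinite sequences all of whose finite prefixes are prefixes of
words of `L`. -/
def LimitLang {K : Type u} (L : Set (List K)) : Set (ℕ → K) :=
  {ρ | ∀ n : ℕ, ∃ w ∈ L, prefixWord ρ n <+: w}

/-- `ρ ≺_W ρ'` iff `ρ ∉ W` and `ρ' ∈ W`. -/
def PrefLt {K : Type u} (W : Set (ℕ → K)) (ρ ρ' : ℕ → K) : Prop := ρ ∉ W ∧ ρ' ∈ W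

/-- `ρ ⪯_W ρ'` iff `¬(ρ' ≺_W ρ)`. -/
def PrefLe {K : Type u} (W : Set (ℕ → K)) (ρ ρ' : ℕ → K) : Prop := ¬ PrefLt W ρ' ρ

/-- `N ⪯_W N'` iff every element of `N` is `⪯_W` some element of `N'`. -/
def SetLe {K : Type u} (W : Set (ℕ → K)) (N N' : Set (ℕ → K)) : Prop :=
  ∀ ρ ∈ N, ∃ ρ' ∈ N', PrefLe W ρ ρ'

/-- `N ≺_W N'` iff some element of `N'` is `≻_W` every element of `N`. -/
def SetLt {K : Type u} (W : Set (ℕ → K)) (N N' : Set (ℕ → K)) : Prop :=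
  ∃ ρ' ∈ N', ∀ ρ ∈ N, PrefLt W ρ ρ'

/-- Left-fold iteration of an update function along a finite word. -/
def iterUpd {M K : Type u} (μ : M → K → M) (m : M) (ρ : List K) : M := ρ.foldl μ m

/-- `L^M_{m,m'}`: the words driving the memory from `m` to `m'`. -/
def MemLang {M K : Type u} (μ : M → K → M) (m m' : M) : Set (List K) :=
  {ρ | iterUpd μ m ρ = m'}

/-- The language `ρ · L`. -/
def consLang {K : Type u} (ρ : List K) (L : Set (List K)) : Set (List K) :=
  {w | ∃ v ∈ L, w = ρ ++ v}

/-- Concatenation of languages. -/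
def catLang {K : Type u} (L L' : Set (List K)) : Set (List K) :=
  {w | ∃ u ∈ L, ∃ v ∈ L', w = u ++ v}

/-- Kleene star of a language. -/
def kstarLang {K : Type u} (L : Set (List K)) : Set (List K) :=
  {w | ∃ ls : List (List K), (∀ u ∈ ls, u ∈ L) ∧ w = ls.flatten}

/-- `W` is `M`-monotone for the memory skeleton `⟨M, minit, μ⟩`. -/
def MMonotone {M K : Type u} (μ : M → K → M) (minit : M) (W : Set (ℕ → K)) : Prop :=
  ∀ m : M, ∀ L1 L2 : Set (List K), RegularLang L1 → RegularLang L2 →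
    (∃ ρ ∈ MemLang μ minit m,
        SetLt W (LimitLang (consLang ρ L1)) (LimitLang (consLang ρ L2))) →
    ∀ ρ' ∈ MemLang μ minit m,
        SetLe W (LimitLang (consLang ρ' L1)) (LimitLang (consLang ρ' L2))

/-- `W` is `M`-selective for the memory skeleton `⟨M, minit, μ⟩`. -/
def MSelective {M K : Type u} (μ : M → K → M) (minit : M) (W : Set (ℕ → K)) : Prop :=
  ∀ ρ : List K, ∀ L1 L2 L3 : Set (List K),
    RegularLang L1 → RegularLang L2 → RegularLang L3 →
    L1 ⊆ MemLang μ (iterUpd μ minit ρ) (iterUpd μ minit ρ) →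
    L2 ⊆ MemLang μ (iterUpd μ minit ρ) (iterUpd μ minit ρ) →
    SetLe W (LimitLang (consLang ρ (catLang (kstarLang (L1 ∪ L2)) L3)))
      (LimitLang (consLang ρ (kstarLang L1)) ∪ LimitLang (consLang ρ (kstarLang L2)) ∪
        LimitLang (consLang ρ L3))

/-- The sequential version of an update function: `none` leaves the memory
unchanged, `some k` updates by `k`. -/
def seqUpd {M K : Type u} (μ : M → K → M) : M → Option K → M :=
  fun m o => match o with
    | none => m
    | some k => μ m k

section Aux

variable {A : Type u}

theorem pw_length (ρ : ℕ → A) (n : ℕ) : (prefixWord ρ n).length = n := by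
  simp [prefixWord]

theorem pw_get (ρ : ℕ → A) (n i : ℕ) (h : i < (prefixWord ρ n).length) :
    (prefixWord ρ n)[i] = ρ i := by
  simp [prefixWord]

theorem pw_add (ρ : ℕ → A) (n m : ℕ) :
    prefixWord ρ (n + m) = prefixWord ρ n ++ prefixWord (fun i => ρ (n + i)) m := by
  apply List.ext_getElem
  · simp [pw_length]
  · intro i h1 h2
    rw [pw_get]
    by_cases h : i < n
    · rw [List.getElem_append_left (by simpa [pw_length] using h), pw_get]
    · rw [List.getElem_append_right (by simpa [pw_length] using h), pw_get]
      simp only [pw_length]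
      congr 1
      omega

theorem pw_mono (ρ : ℕ → A) {n m : ℕ} (h : n ≤ m) : prefixWord ρ n <+: prefixWord ρ m := by
  obtain ⟨k, rfl⟩ := Nat.exists_eq_add_of_le h
  rw [pw_add]
  exact List.prefix_append _ _

theorem pw_succ (ρ : ℕ → A) (n : ℕ) : prefixWord ρ (n + 1) = prefixWord ρ n ++ [ρ n] := by
  rw [pw_add]; simp [prefixWord]

theorem isPre_iff (w : List A) (ρ : ℕ → A) :
    IsPrefixOfSeq w ρ ↔ prefixWord ρ w.length = w := by
  constructor
  · intro h
    apply List.ext_getElem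
    · simp [pw_length]
    · intro i h1 h2
      rw [pw_get]
      exact (h i h2).symm
  · intro h i hi
    have := pw_get ρ w.length i (by rw [pw_length]; exact hi)
    rw [← this]
    simp [h]

theorem isPre_of_pw {w : List A} {ρ : ℕ → A} {n : ℕ} (h : w <+: prefixWord ρ n) :
    IsPrefixOfSeq w ρ := by
  intro i hi
  have h2 : i < (prefixWord ρ n).length := lt_of_lt_of_le hi h.length_le
  have := h.getElem hi
  rw [pw_get] at this
  simpa using this

theorem chain_mono {c : ℕ → List A} (h : ∀ n, c n <+: c (n + 1)) {n m : ℕ} (hnm : n ≤ m) :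
    c n <+: c m := by
  induction m, hnm using Nat.le_induction with
  | base => exact List.prefix_rfl
  | succ k _ ih => exact ih.trans (h k)

theorem chain_limit (c : ℕ → List A) (h : ∀ n, c n <+: c (n + 1)) (hl : ∀ n, n ≤ (c n).length) :
    ∃ σ : ℕ → A, ∀ n, prefixWord σ n <+: c n := by
  refine ⟨fun i => (c (i + 1))[i]'(hl (i + 1)), fun n => ?_⟩
  rw [List.prefix_iff_getElem]
  refine ⟨by rw [pw_length]; exact hl n, fun i hi => ?_⟩
  rw [pw_get]
  rw [pw_length] at hi
  exact (chain_mono h (Nat.succ_le_of_lt hi)).getElem _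

theorem chain_limit_eq {c : ℕ → List A} (h : ∀ n, c n <+: c (n + 1)) (hl : ∀ n, n ≤ (c n).length)
    {σ : ℕ → A} (hs : ∀ n, prefixWord σ n <+: c n) (n : ℕ) :
    prefixWord σ (c n).length = c n := by
  have h1 : c n <+: c (c n).length := chain_mono h (hl n)
  exact (List.prefix_of_prefix_length_le (hs _) h1 (by simp [pw_length])).eq_of_length
    (by simp [pw_length])

theorem limit_of_le {L : Set (List A)} {σ : ℕ → A} (k : ℕ)
    (h : ∀ n, ∃ w ∈ L, prefixWord σ (k + n) <+: w) : σ ∈ LimitLang L := by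
  intro n
  obtain ⟨w, hw, hp⟩ := h n
  exact ⟨w, hw, (pw_mono σ (by omega)).trans hp⟩

theorem limit_shift {L : Set (List A)} {ρ : List A} {σ : ℕ → A}
    (h : σ ∈ LimitLang (consLang ρ L)) : (fun i => σ (ρ.length + i)) ∈ LimitLang L := by
  intro n
  obtain ⟨w, ⟨v, hv, rfl⟩, hp⟩ := h (ρ.length + n)
  refine ⟨v, hv, ?_⟩
  rw [pw_add] at hp
  have h1 : prefixWord σ ρ.length = ρ := by
    have := List.prefix_of_prefix_length_le ((List.prefix_append _ _).trans hp)
      (List.prefix_append ρ v) (by simp [pw_length])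
    exact this.eq_of_length (by simp [pw_length])
  rw [h1] at hp
  exact (List.prefix_append_right_inj ρ).1 hp

theorem limit_prepend {L : Set (List A)} (ρ : List A) (h : (LimitLang L).Nonempty) :
    (LimitLang (consLang ρ L)).Nonempty := by
  obtain ⟨σ, hσ⟩ := h
  refine ⟨fun i => if hi : i < ρ.length then ρ[i] else σ (i - ρ.length), ?_⟩
  apply limit_of_le ρ.length
  intro n
  obtain ⟨w, hw, hp⟩ := hσ n
  refine ⟨ρ ++ w, ⟨w, hw, rfl⟩, ?_⟩
  rw [pw_add]
  have h1 : prefixWord (fun i => if hi : i < ρ.length then ρ[i] else σ (i - ρ.length)) ρ.length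
      = ρ := by
    rw [← isPre_iff]
    intro i hi
    simp [hi]
  rw [h1]
  apply (List.prefix_append_right_inj ρ).2
  simpa using hp

theorem limit_cons_nonempty {L : Set (List A)} {ρ : List A} (ρ' : List A)
    (h : (LimitLang (consLang ρ L)).Nonempty) : (LimitLang (consLang ρ' L)).Nonempty := by
  obtain ⟨σ, hσ⟩ := h
  exact limit_prepend ρ' ⟨_, limit_shift hσ⟩

theorem limit_star_nonempty {L : Set (List A)} {w : List A} (hw : w ∈ L) (hne : w ≠ []) :
    (LimitLang (kstarLang L)).Nonempty := by
  have hpos : 0 < w.length := List.length_pos_iff.2 hne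
  obtain ⟨σ, hσ⟩ := chain_limit (fun n => (List.replicate n w).flatten)
    (fun n => by
      rw [List.replicate_succ', List.flatten_append]
      exact List.prefix_append _ _)
    (fun n => by
      simp only [List.length_flatten, List.map_replicate, List.sum_replicate, smul_eq_mul]
      exact Nat.le_mul_of_pos_right n hpos)
  refine ⟨σ, fun n => ⟨_, ⟨List.replicate n w, ?_, rfl⟩, hσ n⟩⟩
  intro u hu
  rw [List.eq_of_mem_replicate hu]
  exact hw

/-- A language with finitely many left quotients. -/
def FinQ (L : Set (List A)) : Prop :=
  ∃ (Q : Type u) (_ : Finite Q) (f : List A → Q), ∀ u u', f u = f u' →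
    ∀ v, u ++ v ∈ L → u' ++ v ∈ L

theorem RegularLang.finQ {L : Set (List A)} (h : RegularLang L) : FinQ L := by
  obtain ⟨S, hS, σ, _, M, hM⟩ := h
  refine ⟨σ, inferInstance, M.eval, fun u u' he v hv => ?_⟩
  rw [← hM, DFA.mem_accepts] at hv ⊢
  unfold DFA.eval at *
  rw [DFA.evalFrom_of_append] at hv ⊢
  rwa [← he]

theorem FinQ.regular {L : Set (List A)} (h : FinQ L) (S : Finset A)
    (hS : ∀ w ∈ L, ∀ a ∈ w, a ∈ S) : RegularLang L := by
  refine ⟨S, hS, ?_⟩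
  have : Language.IsRegular (L : Language A) := by
    apply Language.IsRegular.of_finite_range_leftQuotient
    obtain ⟨Q, _, f, hf⟩ := h
    have hfac : ∀ u u', f u = f u' →
        Language.leftQuotient (L : Language A) u = Language.leftQuotient (L : Language A) u' := by
      intro u u' he
      apply Set.ext
      intro v
      exact ⟨hf u u' he v, hf u' u he.symm v⟩
    have : (Set.range f).Finite := Set.toFinite _
    refine (this.image (fun q => {v | ∃ u, f u = q ∧ u ++ v ∈ L})).subset ?_
    rintro _ ⟨u, rfl⟩
    refine ⟨f u, ⟨u, rfl⟩, ?_⟩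
    apply Set.ext
    intro v
    exact ⟨fun ⟨u', he, hv⟩ => hf u' u he v hv, fun hv => ⟨u, rfl, hv⟩⟩
  obtain ⟨σ, i, M, hM⟩ := Language.isRegular_iff.{u}.1 this
  exact ⟨σ, i, M, fun w => by rw [hM]; rfl⟩

theorem FinQ.cons_one {L : Set (List A)} (h : FinQ L) (a : A) : FinQ (consLang [a] L) := by
  classical
  obtain ⟨Q, _, f, hf⟩ := h
  refine ⟨Option (Option Q), inferInstance, fun u => match u with
    | [] => none
    | b :: u => if b = a then some (some (f u)) else some none, ?_⟩
  intro u u' he v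
  rintro ⟨x, hx, hv⟩
  cases u with
  | nil =>
    cases u' with
    | nil => exact ⟨x, hx, hv⟩
    | cons b' u' => simp only at he; split_ifs at he
  | cons b u =>
    simp only [List.cons_append, List.nil_append, List.cons.injEq] at hv
    obtain ⟨rfl, rfl⟩ := hv
    cases u' with
    | nil => simp at he
    | cons b' u' =>
      by_cases hb : b' = b
      · subst hb
        simp only [if_true, Option.some.injEq] at he
        exact ⟨u' ++ v, hf _ _ he v hx, rfl⟩
      · simp [hb] at he

theorem FinQ.cons {L : Set (List A)} (h : FinQ L) (ρ : List A) : FinQ (consLang ρ L) := by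
  induction ρ with
  | nil =>
    have : consLang [] L = L := by ext w; simp [consLang]
    rwa [this]
  | cons a ρ ih =>
    have : consLang (a :: ρ) L = consLang [a] (consLang ρ L) := by
      ext w
      simp only [consLang, Set.mem_ofPred_eq]
      constructor
      · rintro ⟨v, hv, rfl⟩
        exact ⟨ρ ++ v, ⟨v, hv, rfl⟩, rfl⟩
      · rintro ⟨_, ⟨v, hv, rfl⟩, rfl⟩
        exact ⟨v, hv, rfl⟩
    rw [this]
    exact ih.cons_one a

theorem star_append {L : Set (List A)} {u v : List A} (hu : u ∈ kstarLang L)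
    (hv : v ∈ kstarLang L) : u ++ v ∈ kstarLang L := by
  obtain ⟨l1, h1, rfl⟩ := hu
  obtain ⟨l2, h2, rfl⟩ := hv
  refine ⟨l1 ++ l2, ?_, by simp⟩
  intro x hx
  rcases List.mem_append.1 hx with h | h
  exacts [h1 x h, h2 x h]

theorem star_of_mem {L : Set (List A)} {u : List A} (hu : u ∈ L) : u ∈ kstarLang L :=
  ⟨[u], by simpa using hu, by simp⟩

theorem star_nil {L : Set (List A)} : [] ∈ kstarLang L := ⟨[], by simp, rfl⟩

theorem star_split {L : Set (List A)} (ls : List (List A)) (hl : ∀ x ∈ ls, x ∈ L)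
    (u v : List A) (h : ls.flatten = u ++ v) :
    (u ∈ kstarLang L ∧ v ∈ kstarLang L) ∨
      ∃ u1 u2 v1 v2, u = u1 ++ u2 ∧ v = v1 ++ v2 ∧ u1 ∈ kstarLang L ∧ u2 ++ v1 ∈ L ∧
        v2 ∈ kstarLang L := by
  induction ls generalizing u with
  | nil =>
    simp only [List.flatten_nil] at h
    obtain ⟨rfl, rfl⟩ := List.append_eq_nil_iff.1 h.symm
    exact Or.inl ⟨star_nil, star_nil⟩
  | cons w ls ih =>
    have hw : w ∈ L := hl w (by simp)
    have hl' : ∀ x ∈ ls, x ∈ L := fun x hx => hl x (by simp [hx])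
    simp only [List.flatten_cons] at h
    rcases List.append_eq_append_iff.1 h with ⟨a, rfl, ha⟩ | ⟨a, rfl, ha⟩
    · rcases ih hl' a ha with ⟨h1, h2⟩ | ⟨u1, u2, v1, v2, rfl, rfl, h1, h2, h3⟩
      · exact Or.inl ⟨star_append (star_of_mem hw) h1, h2⟩
      · exact Or.inr ⟨w ++ u1, u2, v1, v2, by simp, rfl, star_append (star_of_mem hw) h1, h2, h3⟩
    · exact Or.inr ⟨[], u, a, ls.flatten, by simp, ha, star_nil, hw, ls, hl', rfl⟩

theorem FinQ.star {L : Set (List A)} (h : FinQ L) : FinQ (kstarLang L) := by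
  obtain ⟨Q, _, f, hf⟩ := h
  refine ⟨Set Q × ULift.{u} Prop, inferInstance,
    fun u => ({q | ∃ u1 u2, u = u1 ++ u2 ∧ u1 ∈ kstarLang L ∧ f u2 = q}, ⟨u ∈ kstarLang L⟩), ?_⟩
  rintro u u' he v ⟨ls, hls, hv⟩
  rw [Prod.mk.injEq, ULift.up.injEq] at he
  obtain ⟨he1, he2⟩ := he
  rcases star_split ls hls u v hv.symm with ⟨h1, h2⟩ | ⟨u1, u2, v1, v2, rfl, rfl, h1, h2, h3⟩
  · exact star_append (he2 ▸ h1) h2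
  · have : f u2 ∈ {q | ∃ x1 x2, u1 ++ u2 = x1 ++ x2 ∧ x1 ∈ kstarLang L ∧ f x2 = q} :=
      ⟨u1, u2, rfl, h1, rfl⟩
    rw [he1] at this
    obtain ⟨x1, x2, rfl, hx1, hx2⟩ := this
    have := hf _ _ hx2.symm _ h2
    have := star_append hx1 (star_append (star_of_mem this) h3)
    simpa using this

end Aux

section Proj

variable {K : Type u}

/-- The projection of a language. -/
def projL (L : Set (List (Option K))) : Set (List K) := List.reduceOption '' L

theorem FinQ.proj {L : Set (List (Option K))} (h : FinQ L) : FinQ (projL L) := by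
  obtain ⟨Q, _, f, hf⟩ := h
  refine ⟨Set Q, inferInstance, fun u => {q | ∃ w, w.reduceOption = u ∧ f w = q}, ?_⟩
  rintro u u' he v ⟨w, hw, hv⟩
  obtain ⟨w1, w2, rfl, h1, h2⟩ := (List.reduceOption_eq_append_iff _ _ _).1 hv
  have : f w1 ∈ {q | ∃ w, w.reduceOption = u ∧ f w = q} := ⟨w1, h1, rfl⟩
  simp only at he
  rw [he] at this
  obtain ⟨w1', hw1', hq⟩ := this
  exact ⟨w1' ++ w2, hf _ _ hq.symm _ hw, by rw [List.reduceOption_append, hw1', h2]⟩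

theorem regular_proj {L : Set (List (Option K))} (h : RegularLang L) : RegularLang (projL L) := by
  have hq := h.finQ.proj
  obtain ⟨S, hS, -⟩ := h
  refine hq.regular S.eraseNone ?_
  rintro _ ⟨w, hw, rfl⟩ a ha
  rw [List.reduceOption_mem_iff] at ha
  simpa using hS w hw _ ha

/-- The embedding of a language. -/
def embL (L : Set (List K)) : Set (List (Option K)) := List.map some '' L

theorem FinQ.emb {L : Set (List K)} (h : FinQ L) : FinQ (embL L) := by
  classical
  obtain ⟨Q, _, f, hf⟩ := h
  refine ⟨Option Q, inferInstance,
    fun u => if none ∈ u then none else some (f u.reduceOption), ?_⟩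
  rintro u u' he v ⟨w, hw, hv⟩
  obtain ⟨w1, w2, rfl, rfl, rfl⟩ := List.map_eq_append_iff.1 hv
  have h1 : ∀ x : List K, (x.map some).reduceOption = x := by
    intro x; induction x with
    | nil => rfl
    | cons a x ih => simp [ih]
  have h2 : ∀ u : List (Option K), none ∉ u → u = u.reduceOption.map some := by
    intro u hu
    induction u with
    | nil => rfl
    | cons a u ih =>
      cases a with
      | none => simp at hu
      | some a => simp at hu ⊢; exact ih hu
  by_cases hn : none ∈ u'
  · simp [hn] at he
  · simp [hn, h1] at he
    rw [h2 u' hn]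
    exact ⟨u'.reduceOption ++ w2, hf _ _ he _ hw, by simp⟩

theorem regular_emb {L : Set (List K)} (h : RegularLang L) : RegularLang (embL L) := by
  have hq := h.finQ.emb
  obtain ⟨S, hS, -⟩ := h
  refine hq.regular (S.map Function.Embedding.some) ?_
  rintro _ ⟨w, hw, rfl⟩ a ha
  obtain ⟨b, hb, rfl⟩ := List.mem_map.1 ha
  simpa using hS w hw _ hb

theorem proj_uniq {τ τ' : ℕ → K} {σ : ℕ → Option K} (h : IsProjOf τ σ) (h' : IsProjOf τ' σ) :
    τ = τ' := by
  funext i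
  obtain ⟨n, hn⟩ := (h.2.eventually_ge_atTop (i + 1)).exists
  rw [← h.1 n i hn, ← h'.1 n i hn]

theorem proj_limit {L : Set (List (Option K))} {τ : ℕ → K} {σ : ℕ → Option K}
    (hσ : σ ∈ LimitLang L) (h : IsProjOf τ σ) : τ ∈ LimitLang (projL L) := by
  intro n
  obtain ⟨m, hm⟩ := (h.2.eventually_ge_atTop n).exists
  obtain ⟨w, hw, hp⟩ := hσ m
  refine ⟨_, ⟨w, hw, rfl⟩, ?_⟩
  refine List.IsPrefix.trans ?_ hp.reduceOption
  rw [← (isPre_iff _ _).1 (h.1 m)]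
  exact pw_mono _ hm

theorem lift_step {L : Set (List (Option K))} (h : FinQ L) (τ : ℕ → K) (n : ℕ)
    (u : List (Option K)) (hu : u.reduceOption = prefixWord τ n)
    (hx : ∀ N, ∃ w, prefixWord τ N <+: (u ++ w).reduceOption ∧ u ++ w ∈ L) :
    ∃ u', u <+: u' ∧ u'.reduceOption = prefixWord τ (n + 1) ∧
      ∀ N, ∃ w, prefixWord τ N <+: (u' ++ w).reduceOption ∧ u' ++ w ∈ L := by
  obtain ⟨Q, _, f, hf⟩ := h
  have key : ∀ N, ∃ u' w, u <+: u' ∧ u'.reduceOption = prefixWord τ (n + 1) ∧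
      prefixWord τ (n + 1 + N) <+: (u' ++ w).reduceOption ∧ u' ++ w ∈ L := by
    intro N
    obtain ⟨w, hw, hL⟩ := hx (n + 1 + N)
    obtain ⟨t, ht⟩ := hw
    have ht0 := ht
    rw [List.reduceOption_append, pw_add, pw_succ, hu, List.append_assoc, List.append_assoc,
      List.append_cancel_left_eq] at ht
    obtain ⟨w1, w2, rfl, h1, h2⟩ := (List.reduceOption_eq_append_iff _ _ _).1 ht.symm
    refine ⟨u ++ w1, w2, List.prefix_append _ _, ?_, ?_, by simpa using hL⟩
    · rw [List.reduceOption_append, hu, h1, pw_succ]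
    · rw [List.append_assoc, ← ht0]
      exact List.prefix_append _ _
  choose U V h1 h2 h3 h4 using key
  obtain ⟨q, hq⟩ := Finite.exists_infinite_fiber (fun N => f (U N))
  have hq' : ((fun N => f (U N)) ⁻¹' {q}).Infinite := Set.infinite_coe_iff.1 hq
  obtain ⟨N0, hN0⟩ := hq'.nonempty
  refine ⟨U N0, h1 _, h2 _, fun N => ?_⟩
  obtain ⟨N', hN', hlt⟩ := hq'.exists_gt N
  refine ⟨V N', ?_, hf (U N') (U N0) ?_ _ (h4 N')⟩
  · have := h3 N'
    rw [List.reduceOption_append, h2] at this ⊢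
    exact (pw_mono τ (by omega)).trans this
  · exact (show f (U N') = q from hN').trans (show f (U N0) = q from hN0).symm

theorem lift_limit {L : Set (List (Option K))} (h : FinQ L) {τ : ℕ → K}
    (hτ : τ ∈ LimitLang (projL L)) : ∃ σ ∈ LimitLang L, IsProjOf τ σ := by
  let P : ℕ → List (Option K) → Prop := fun n u => u.reduceOption = prefixWord τ n ∧
    ∀ N, ∃ w, prefixWord τ N <+: (u ++ w).reduceOption ∧ u ++ w ∈ L
  have h0 : P 0 [] := by
    refine ⟨by simp [prefixWord], fun N => ?_⟩
    obtain ⟨_, ⟨w, hw, rfl⟩, hp⟩ := hτ N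
    exact ⟨w, by simpa using hp, by simpa using hw⟩
  have hs : ∀ n (u : {u // P n u}), ∃ u' : {u // P (n + 1) u}, u.1 <+: u'.1 := by
    rintro n ⟨u, hu1, hu2⟩
    obtain ⟨u', a, b, c⟩ := lift_step h τ n u hu1 hu2
    exact ⟨⟨u', b, c⟩, a⟩
  choose nx hnx using hs
  let C : ∀ n, {u // P n u} := fun n => Nat.rec ⟨[], h0⟩ nx n
  let c : ℕ → List (Option K) := fun n => (C n).1
  have hc : ∀ n, c n <+: c (n + 1) := fun n => hnx n (C n)
  have hP : ∀ n, P n (c n) := fun n => (C n).2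
  have hlen : ∀ n, (c n).reduceOption.length = n := fun n => by rw [(hP n).1, pw_length]
  have hl : ∀ n, n ≤ (c n).length := fun n => by
    have := List.reduceOption_length_le (c n)
    rwa [hlen] at this
  obtain ⟨σ, hσ⟩ := chain_limit c hc hl
  refine ⟨σ, ?_, ?_, ?_⟩
  · intro n
    obtain ⟨w, -, hw⟩ := (hP n).2 0
    exact ⟨_, hw, (hσ n).trans (List.prefix_append _ _)⟩
  · intro n
    have := (hσ n).reduceOption
    rw [(hP n).1] at this
    exact isPre_of_pw this
  · apply Filter.tendsto_atTop_atTop_of_monotone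
    · intro a b hab
      exact (pw_mono σ hab).reduceOption.length_le
    · intro b
      refine ⟨(c b).length, ?_⟩
      rw [chain_limit_eq hc hl hσ, hlen]

theorem proj_cons (ρ : List (Option K)) (L : Set (List (Option K))) :
    projL (consLang ρ L) = consLang ρ.reduceOption (projL L) := by
  ext w
  constructor
  · rintro ⟨_, ⟨v, hv, rfl⟩, rfl⟩
    exact ⟨_, ⟨v, hv, rfl⟩, List.reduceOption_append _ _⟩
  · rintro ⟨_, ⟨v, hv, rfl⟩, rfl⟩
    exact ⟨_, ⟨v, hv, rfl⟩, List.reduceOption_append _ _⟩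

theorem proj_cat (L L' : Set (List (Option K))) :
    projL (catLang L L') = catLang (projL L) (projL L') := by
  ext w
  constructor
  · rintro ⟨_, ⟨u, hu, v, hv, rfl⟩, rfl⟩
    exact ⟨_, ⟨u, hu, rfl⟩, _, ⟨v, hv, rfl⟩, List.reduceOption_append _ _⟩
  · rintro ⟨_, ⟨u, hu, rfl⟩, _, ⟨v, hv, rfl⟩, rfl⟩
    exact ⟨_, ⟨u, hu, v, hv, rfl⟩, List.reduceOption_append _ _⟩

theorem star_image {A B : Type u} (g : List A → List B) (hg0 : g [] = [])
    (hg : ∀ x y, g (x ++ y) = g x ++ g y) (L : Set (List A)) :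
    g '' (kstarLang L) = kstarLang (g '' L) := by
  have hfl : ∀ ls : List (List A), g ls.flatten = (ls.map g).flatten := by
    intro ls
    induction ls with
    | nil => simpa using hg0
    | cons a ls ih => simp [hg, ih]
  ext w
  constructor
  · rintro ⟨_, ⟨ls, hls, rfl⟩, rfl⟩
    refine ⟨ls.map g, ?_, hfl ls⟩
    intro u hu
    obtain ⟨x, hx, rfl⟩ := List.mem_map.1 hu
    exact ⟨x, hls x hx, rfl⟩
  · rintro ⟨ls, hls, rfl⟩
    induction ls with
    | nil => exact ⟨[], star_nil, by simpa using hg0⟩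
    | cons a ls ih =>
      obtain ⟨x, hx, hx2⟩ := ih (fun u hu => hls u (by simp [hu]))
      obtain ⟨y, hy, rfl⟩ := hls a (by simp)
      exact ⟨y ++ x, star_append (star_of_mem hy) hx, by simp [hg, hx2]⟩

theorem proj_star (L : Set (List (Option K))) : projL (kstarLang L) = kstarLang (projL L) :=
  star_image _ rfl List.reduceOption_append L

theorem emb_star (L : Set (List K)) : embL (kstarLang L) = kstarLang (embL L) :=
  star_image _ rfl (fun _ _ => List.map_append) L

theorem emb_cons (ρ : List K) (L : Set (List K)) :
    embL (consLang ρ L) = consLang (ρ.map some) (embL L) := by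
  ext w
  constructor
  · rintro ⟨_, ⟨v, hv, rfl⟩, rfl⟩
    exact ⟨_, ⟨v, hv, rfl⟩, List.map_append⟩
  · rintro ⟨_, ⟨v, hv, rfl⟩, rfl⟩
    exact ⟨_, ⟨v, hv, rfl⟩, List.map_append⟩

theorem emb_cat (L L' : Set (List K)) :
    embL (catLang L L') = catLang (embL L) (embL L') := by
  ext w
  constructor
  · rintro ⟨_, ⟨u, hu, v, hv, rfl⟩, rfl⟩
    exact ⟨_, ⟨u, hu, rfl⟩, _, ⟨v, hv, rfl⟩, List.map_append⟩
  · rintro ⟨_, ⟨u, hu, rfl⟩, _, ⟨v, hv, rfl⟩, rfl⟩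
    exact ⟨_, ⟨u, hu, v, hv, rfl⟩, List.map_append⟩

/-- The embedding of sequences. -/
def embS (τ : ℕ → K) : ℕ → Option K := fun i => some (τ i)

theorem pw_some (τ : ℕ → K) (n : ℕ) :
    prefixWord (embS τ) n = (prefixWord τ n).map some := by
  simp [embS, prefixWord, List.map_ofFn, Function.comp_def]

theorem map_some_reduce (x : List K) : (x.map some).reduceOption = x := by
  induction x with
  | nil => rfl
  | cons a x ih => simp [ih]

theorem isProj_embS (τ : ℕ → K) : IsProjOf τ (embS τ) := by
  constructor
  · intro n
    rw [pw_some, map_some_reduce]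
    exact isPre_of_pw List.prefix_rfl
  · simp only [pw_some, map_some_reduce, pw_length]
    exact Filter.tendsto_id

theorem embS_mem (W : Set (ℕ → K)) (τ : ℕ → K) : embS τ ∈ SeqObj W ↔ τ ∈ W := by
  constructor
  · rintro ⟨ρ, hρ, h⟩
    rwa [proj_uniq (isProj_embS τ) h]
  · intro h
    exact ⟨τ, h, isProj_embS τ⟩

theorem limit_emb (L : Set (List K)) : LimitLang (embL L) = embS '' LimitLang L := by
  ext σ
  constructor
  · intro h
    have hs : ∀ i, ∃ k, some k = σ i := by
      intro i
      obtain ⟨_, ⟨w, hw, rfl⟩, hp⟩ := h (i + 1)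
      have : σ i ∈ prefixWord σ (i + 1) := by rw [pw_succ]; simp
      obtain ⟨k, -, hk⟩ := List.mem_map.1 (hp.subset this)
      exact ⟨k, hk⟩
    choose τ hτ using hs
    have he : embS τ = σ := funext hτ
    subst he
    refine ⟨τ, ?_, rfl⟩
    intro n
    obtain ⟨_, ⟨w, hw, rfl⟩, hp⟩ := h n
    refine ⟨w, hw, ?_⟩
    have := hp.reduceOption
    rwa [pw_some, map_some_reduce, map_some_reduce] at this
  · rintro ⟨τ, hτ, rfl⟩ n
    obtain ⟨w, hw, hp⟩ := hτ n
    refine ⟨_, ⟨w, hw, rfl⟩, ?_⟩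
    rw [pw_some]
    exact hp.map _

theorem setLe_emb (W N N' : Set (ℕ → K)) :
    SetLe (SeqObj W) (embS '' N) (embS '' N') ↔ SetLe W N N' := by
  simp [SetLe, PrefLe, PrefLt, embS_mem]

theorem setLt_emb (W N N' : Set (ℕ → K)) :
    SetLt (SeqObj W) (embS '' N) (embS '' N') ↔ SetLt W N N' := by
  simp [SetLt, PrefLt, embS_mem]

theorem iter_seq {M : Type u} (μ : M → K → M) (m : M) (w : List (Option K)) :
    iterUpd (seqUpd μ) m w = iterUpd μ m w.reduceOption := by
  induction w generalizing m with
  | nil => rfl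
  | cons a w ih =>
    cases a with
    | none => exact ih m
    | some a => exact ih (μ m a)

end Proj

/-- `W` is `M`-monotone and `M`-selective iff `Seq(W)` is `Seq(M)`-monotone and
`Seq(M)`-selective over the alphabet `Option K`. -/
theorem stmt9 {K M : Type u} [Nonempty K] [Nonempty M]
    (minit : M) (μ : M → K → M) (W : Set (ℕ → K)) :
    (MMonotone μ minit W ∧ MSelective μ minit W) ↔
    (MMonotone (seqUpd μ) minit (SeqObj W) ∧
     MSelective (seqUpd μ) minit (SeqObj W)) := by
  constructor
  · rintro ⟨hm, hs⟩
    constructor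
    · intro m L1 L2 r1 r2 hex ρ' hρ'
      obtain ⟨ρ, hρ, σ, hσ, hlt⟩ := hex
      have hmem : ∀ w ∈ MemLang (seqUpd μ) minit m, w.reduceOption ∈ MemLang μ minit m := by
        intro w hw
        exact (iter_seq μ minit w).symm.trans hw
      have hne : (LimitLang (consLang ρ' L2)).Nonempty := limit_cons_nonempty ρ' ⟨σ, hσ⟩
      intro σ1 hσ1
      by_cases hW : σ1 ∈ SeqObj W
      · obtain ⟨τ1, hτ1, hp1⟩ := hW
        have hne1 : (LimitLang (consLang ρ L1)).Nonempty := limit_cons_nonempty ρ ⟨σ1, hσ1⟩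
        obtain ⟨σ0, hσ0⟩ := hne1
        obtain ⟨τ, hτ, hp⟩ := (hlt σ0 hσ0).2
        have hle := hm m (projL L1) (projL L2) (regular_proj r1) (regular_proj r2)
          ⟨ρ.reduceOption, hmem ρ hρ, τ, by
            rw [← proj_cons]; exact proj_limit hσ hp, by
            intro τ2 hτ2
            rw [← proj_cons] at hτ2
            obtain ⟨σ2, hσ2, hp2⟩ := lift_limit (r1.finQ.cons ρ) hτ2
            exact ⟨fun hc => (hlt σ2 hσ2).1 ⟨τ2, hc, hp2⟩, hτ⟩⟩
          ρ'.reduceOption (hmem ρ' hρ') τ1 (by rw [← proj_cons]; exact proj_limit hσ1 hp1)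
        obtain ⟨τ3, hτ3, hle3⟩ := hle
        have hW3 : τ3 ∈ W := by
          by_contra hc
          exact hle3 ⟨hc, hτ1⟩
        rw [← proj_cons] at hτ3
        obtain ⟨σ3, hσ3, hp3⟩ := lift_limit (r2.finQ.cons ρ') hτ3
        exact ⟨σ3, hσ3, fun hc => hc.1 ⟨τ3, hW3, hp3⟩⟩
      · obtain ⟨σ', hσ'⟩ := hne
        exact ⟨σ', hσ', fun hc => hW hc.2⟩
    · intro ρ L1 L2 L3 r1 r2 r3 s1 s2 σ hσ
      by_cases hW : σ ∈ SeqObj W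
      · obtain ⟨τ, hτ, hp⟩ := hW
        have hmem : ∀ L ⊆ MemLang (seqUpd μ) (iterUpd (seqUpd μ) minit ρ)
            (iterUpd (seqUpd μ) minit ρ), projL L ⊆ MemLang μ (iterUpd μ minit ρ.reduceOption)
            (iterUpd μ minit ρ.reduceOption) := by
          rintro L hL _ ⟨w, hw, rfl⟩
          have := hL hw
          simp only [MemLang, Set.mem_ofPred_eq, iter_seq] at this ⊢
          exact this
        have hlim := proj_limit hσ hp
        have hun : projL (L1 ∪ L2) = projL L1 ∪ projL L2 := Set.image_union _ _ _
        rw [proj_cons, proj_cat, proj_star, hun] at hlim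
        obtain ⟨τ', hτ', hle⟩ := hs ρ.reduceOption (projL L1) (projL L2) (projL L3)
          (regular_proj r1) (regular_proj r2) (regular_proj r3) (hmem _ s1) (hmem _ s2) τ hlim
        have hW' : τ' ∈ W := by
          by_contra hc
          exact hle ⟨hc, hτ⟩
        have fin : ∀ L, FinQ L → τ' ∈ LimitLang (consLang ρ.reduceOption (projL L)) →
            ∃ σ' ∈ LimitLang (consLang ρ L), PrefLe (SeqObj W) σ σ' := by
          intro L hL h
          rw [← proj_cons] at h
          obtain ⟨σ', hσ', hp'⟩ := lift_limit (hL.cons ρ) h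
          exact ⟨σ', hσ', fun hc => hc.1 ⟨τ', hW', hp'⟩⟩
        rcases hτ' with (h | h) | h
        · rw [← proj_star] at h
          obtain ⟨σ', a, b⟩ := fin _ r1.finQ.star h
          exact ⟨σ', Or.inl (Or.inl a), b⟩
        · rw [← proj_star] at h
          obtain ⟨σ', a, b⟩ := fin _ r2.finQ.star h
          exact ⟨σ', Or.inl (Or.inr a), b⟩
        · obtain ⟨σ', a, b⟩ := fin _ r3.finQ h
          exact ⟨σ', Or.inr a, b⟩
      · have hle : ∀ σ', PrefLe (SeqObj W) σ σ' := fun σ' hc => hW hc.2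
        by_cases h1 : ∃ w ∈ L1, w ≠ []
        · obtain ⟨w, hw, hne⟩ := h1
          obtain ⟨σ', h⟩ := limit_prepend ρ (limit_star_nonempty hw hne)
          exact ⟨σ', Or.inl (Or.inl h), hle _⟩
        by_cases h2 : ∃ w ∈ L2, w ≠ []
        · obtain ⟨w, hw, hne⟩ := h2
          obtain ⟨σ', h⟩ := limit_prepend ρ (limit_star_nonempty hw hne)
          exact ⟨σ', Or.inl (Or.inr h), hle _⟩
        push Not at h1 h2
        refine ⟨σ, Or.inr ?_, hle _⟩
        intro n
        obtain ⟨_, ⟨_, ⟨_, ⟨ls, hls, rfl⟩, v, hv, rfl⟩, rfl⟩, hp⟩ := hσ n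
        have : ls.flatten = [] := by
          rw [List.flatten_eq_nil_iff]
          intro u hu
          rcases hls u hu with h | h
          exacts [h1 u h, h2 u h]
        rw [this] at hp
        exact ⟨_, ⟨v, hv, rfl⟩, hp⟩
  · rintro ⟨hm, hs⟩
    have hiter : ∀ m (w : List K), iterUpd (seqUpd μ) m (w.map some) = iterUpd μ m w := by
      intro m w
      rw [iter_seq, map_some_reduce]
    constructor
    · intro m L1 L2 r1 r2 hex ρ' hρ'
      obtain ⟨ρ, hρ, hlt⟩ := hex
      have := hm m (embL L1) (embL L2) (regular_emb r1) (regular_emb r2)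
        ⟨ρ.map some, (hiter minit ρ).trans hρ, by
          rw [← emb_cons, ← emb_cons, limit_emb, limit_emb, setLt_emb]; exact hlt⟩
        (ρ'.map some) ((hiter minit ρ').trans hρ')
      rwa [← emb_cons, ← emb_cons, limit_emb, limit_emb, setLe_emb] at this
    · intro ρ L1 L2 L3 r1 r2 r3 s1 s2
      have hmem : ∀ L ⊆ MemLang μ (iterUpd μ minit ρ) (iterUpd μ minit ρ),
          embL L ⊆ MemLang (seqUpd μ) (iterUpd (seqUpd μ) minit (ρ.map some))
            (iterUpd (seqUpd μ) minit (ρ.map some)) := by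
        rintro L hL _ ⟨w, hw, rfl⟩
        have := hL hw
        simp only [MemLang, Set.mem_ofPred_eq, hiter] at this ⊢
        exact this
      have := hs (ρ.map some) (embL L1) (embL L2) (embL L3) (regular_emb r1) (regular_emb r2)
        (regular_emb r3) (hmem _ s1) (hmem _ s2)
      have hun : embL L1 ∪ embL L2 = embL (L1 ∪ L2) := (Set.image_union _ _ _).symm
      rw [hun, ← emb_star, ← emb_star, ← emb_star, ← emb_cat, ← emb_cons, ← emb_cons, ← emb_cons,
        ← emb_cons, limit_emb, limit_emb, limit_emb, limit_emb, ← Set.image_union,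
        ← Set.image_union, setLe_emb] at this
      exact this
end
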